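/- arXiv:1409.5184 — 3 statements merged into one kernel-verified Lean document; each statement's English description precedes it below -/
import Mathlib

section
/- Let (H, m, η, Δ, ε) be a bialgebra over a field k and let α: H → H be a bialgebra automorphism. Define a new multiplication a∗b = α(ab) and a new comultiplication Δ'(h) = Δ(α⁻¹(h)). Then H_α = (H, α, ∗, 1_H, Δ', ε) is a monoidal Hom-bialgebra with twisting automorphism α; that is: α(a)∗(b∗c) = (a∗b)∗α(c); a∗1_H = 1_H∗a = α(a); α(a∗b)=α(a)∗α(b) and α(1_H)=1_H; writing Δ'(h)=h₁'⊗h₂', one has α⁻¹(h₁')⊗Δ'(h₂') = Δ'(h₁')⊗α⁻¹(h₂') and ε(h₁')h₂' = h₁'ε(h₂') = α⁻¹(h); Δ'∘α=(α⊗α)∘Δ' and ε∘α=ε; and Δ' and ε are multiplicative and unital with respect to ∗. -/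
open TensorProduct

noncomputable section

/-- A (unital) monoidal Hom-bialgebra, following Caenepeel–Goyvaerts.
The algebra axioms are stated pointwise, the coalgebra axioms at the level of
linear maps (using the standard vector-space associator to compare the two
sides of Hom-coassociativity). -/
structure MonoidalHomBialgebra (k : Type) [Field k] (H : Type) [AddCommGroup H] [Module k H] where
  mul : H →ₗ[k] H →ₗ[k] H
  one : H
  comul : H →ₗ[k] H ⊗[k] H
  counit : H →ₗ[k] k
  aut : H ≃ₗ[k] H
  hom_assoc : ∀ a b c, mul (aut a) (mul b c) = mul (mul a b) (aut c)
  mulOne : ∀ a, mul a one = aut a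
  oneMul : ∀ a, mul one a = aut a
  aut_mul : ∀ a b, aut (mul a b) = mul (aut a) (aut b)
  aut_one : aut one = one
  coassoc :
    (TensorProduct.assoc k H H H).toLinearMap ∘ₗ
        (TensorProduct.map comul aut.symm.toLinearMap) ∘ₗ comul =
      (TensorProduct.map aut.symm.toLinearMap comul) ∘ₗ comul
  counit_left :
    (TensorProduct.lid k H).toLinearMap ∘ₗ (TensorProduct.map counit LinearMap.id) ∘ₗ comul =
      aut.symm.toLinearMap
  counit_right :
    (TensorProduct.rid k H).toLinearMap ∘ₗ (TensorProduct.map LinearMap.id counit) ∘ₗ comul =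
      aut.symm.toLinearMap
  comul_aut :
    comul ∘ₗ aut.toLinearMap = (TensorProduct.map aut.toLinearMap aut.toLinearMap) ∘ₗ comul
  counit_aut : counit ∘ₗ aut.toLinearMap = counit
  comul_mul :
    comul ∘ₗ TensorProduct.lift mul =
      (TensorProduct.map (TensorProduct.lift mul) (TensorProduct.lift mul)) ∘ₗ
        (TensorProduct.tensorTensorTensorComm k H H H H).toLinearMap ∘ₗ
          (TensorProduct.map comul comul)
  comul_one : comul one = one ⊗ₜ[k] one
  counit_mul : ∀ a b, counit (mul a b) = counit a * counit b
  counit_one : counit one = 1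

/-- A monoidal Hom-Hopf algebra: a monoidal Hom-bialgebra with an antipode. -/
structure MonoidalHomHopf (k : Type) [Field k] (H : Type) [AddCommGroup H] [Module k H]
    extends MonoidalHomBialgebra k H where
  antipode : H →ₗ[k] H
  antipode_aut : antipode ∘ₗ aut.toLinearMap = aut.toLinearMap ∘ₗ antipode
  antipode_mul_left :
    TensorProduct.lift mul ∘ₗ (TensorProduct.map antipode LinearMap.id) ∘ₗ comul =
      LinearMap.toSpanSingleton k H one ∘ₗ counit
  antipode_mul_right :
    TensorProduct.lift mul ∘ₗ (TensorProduct.map LinearMap.id antipode) ∘ₗ comul =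
      LinearMap.toSpanSingleton k H one ∘ₗ counit

variable {k : Type} [Field k] {H : Type} [AddCommGroup H] [Module k H]

/-- A right (H,α)-Hom-comodule. -/
structure HomComodule (Hb : MonoidalHomBialgebra k H) (M : Type) [AddCommGroup M] [Module k M] where
  coact : M →ₗ[k] M ⊗[k] H
  aut : M ≃ₗ[k] M
  coassoc :
    (TensorProduct.map aut.symm.toLinearMap Hb.comul) ∘ₗ coact =
      (TensorProduct.assoc k M H H).toLinearMap ∘ₗ
        (TensorProduct.map coact Hb.aut.symm.toLinearMap) ∘ₗ coact
  counit :
    (TensorProduct.rid k M).toLinearMap ∘ₗ (TensorProduct.map LinearMap.id Hb.counit) ∘ₗ coact =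
      aut.symm.toLinearMap
  coact_aut :
    coact ∘ₗ aut.toLinearMap = (TensorProduct.map aut.toLinearMap Hb.aut.toLinearMap) ∘ₗ coact

/-- A left (H,α)-Hom-comodule. -/
structure HomLeftComodule (Hb : MonoidalHomBialgebra k H) (M : Type) [AddCommGroup M] [Module k M] where
  coact : M →ₗ[k] H ⊗[k] M
  aut : M ≃ₗ[k] M
  coassoc :
    (TensorProduct.map Hb.comul aut.symm.toLinearMap) ∘ₗ coact =
      (TensorProduct.assoc k H H M).symm.toLinearMap ∘ₗ
        (TensorProduct.map Hb.aut.symm.toLinearMap coact) ∘ₗ coact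
  counit :
    (TensorProduct.lid k M).toLinearMap ∘ₗ (TensorProduct.map Hb.counit LinearMap.id) ∘ₗ coact =
      aut.symm.toLinearMap
  coact_aut :
    coact ∘ₗ aut.toLinearMap = (TensorProduct.map Hb.aut.toLinearMap aut.toLinearMap) ∘ₗ coact

/-- A right (H,α)-Hom-comodule algebra. -/
structure HomComoduleAlgebra (Hb : MonoidalHomBialgebra k H) (A : Type) [AddCommGroup A] [Module k A] where
  mul : A →ₗ[k] A →ₗ[k] A
  one : A
  aut : A ≃ₗ[k] A
  hom_assoc : ∀ a b c, mul (aut a) (mul b c) = mul (mul a b) (aut c)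
  mulOne : ∀ a, mul a one = aut a
  oneMul : ∀ a, mul one a = aut a
  aut_mul : ∀ a b, aut (mul a b) = mul (aut a) (aut b)
  aut_one : aut one = one
  coact : A →ₗ[k] A ⊗[k] H
  coassoc :
    (TensorProduct.map aut.symm.toLinearMap Hb.comul) ∘ₗ coact =
      (TensorProduct.assoc k A H H).toLinearMap ∘ₗ
        (TensorProduct.map coact Hb.aut.symm.toLinearMap) ∘ₗ coact
  counit :
    (TensorProduct.rid k A).toLinearMap ∘ₗ (TensorProduct.map LinearMap.id Hb.counit) ∘ₗ coact =
      aut.symm.toLinearMap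
  coact_aut :
    coact ∘ₗ aut.toLinearMap = (TensorProduct.map aut.toLinearMap Hb.aut.toLinearMap) ∘ₗ coact
  coact_mul :
    coact ∘ₗ TensorProduct.lift mul =
      (TensorProduct.map (TensorProduct.lift mul) (TensorProduct.lift Hb.mul)) ∘ₗ
        (TensorProduct.tensorTensorTensorComm k A H A H).toLinearMap ∘ₗ
          (TensorProduct.map coact coact)
  coact_one : coact one = one ⊗ₜ[k] Hb.one

variable {A : Type} [AddCommGroup A] [Module k A]

/-- A right (A,β)-Hom-module. -/
structure HomModule {Hb : MonoidalHomBialgebra k H} (Ac : HomComoduleAlgebra Hb A)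
    (M : Type) [AddCommGroup M] [Module k M] where
  act : M →ₗ[k] A →ₗ[k] M
  aut : M ≃ₗ[k] M
  act_act : ∀ m a b, act (act m a) (Ac.aut b) = act (aut m) (Ac.mul a b)
  act_one : ∀ m, act m Ac.one = aut m
  aut_act : ∀ m a, aut (act m a) = act (aut m) (Ac.aut a)

/-- A right Hom-module over the subalgebra of `A` carved out by `Bset`
(typically the coinvariants `B = A^{co H}`): the action is a bilinear map
`M × A → M` whose Hom-module axioms are only required on `Bset`. -/
structure HomModuleOn {Hb : MonoidalHomBialgebra k H} (Ac : HomComoduleAlgebra Hb A)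
    (Bset : Set A) (M : Type) [AddCommGroup M] [Module k M] where
  act : M →ₗ[k] A →ₗ[k] M
  aut : M ≃ₗ[k] M
  act_act : ∀ m, ∀ b ∈ Bset, ∀ b' ∈ Bset, act (act m b) (Ac.aut b') = act (aut m) (Ac.mul b b')
  act_one : ∀ m, act m Ac.one = aut m
  aut_act : ∀ m, ∀ b ∈ Bset, aut (act m b) = act (aut m) (Ac.aut b)

/-- A left Hom-module over the subalgebra of `A` carved out by `Bset`. -/
structure HomLeftModuleOn {Hb : MonoidalHomBialgebra k H} (Ac : HomComoduleAlgebra Hb A)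
    (Bset : Set A) (M : Type) [AddCommGroup M] [Module k M] where
  act : A →ₗ[k] M →ₗ[k] M
  aut : M ≃ₗ[k] M
  act_act : ∀ m, ∀ b ∈ Bset, ∀ b' ∈ Bset, act (Ac.aut b) (act b' m) = act (Ac.mul b b') (aut m)
  act_one : ∀ m, act Ac.one m = aut m
  aut_act : ∀ m, ∀ b ∈ Bset, aut (act b m) = act (Ac.aut b) (aut m)

/-- A right-right (H,A)-Hom-Hopf module (a relative Hom-Hopf module). -/
structure HomHopfModule {Hb : MonoidalHomBialgebra k H} (Ac : HomComoduleAlgebra Hb A)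
    (N : Type) [AddCommGroup N] [Module k N] where
  act : N →ₗ[k] A →ₗ[k] N
  aut : N ≃ₗ[k] N
  act_act : ∀ n a b, act (act n a) (Ac.aut b) = act (aut n) (Ac.mul a b)
  act_one : ∀ n, act n Ac.one = aut n
  aut_act : ∀ n a, aut (act n a) = act (aut n) (Ac.aut a)
  coact : N →ₗ[k] N ⊗[k] H
  coassoc :
    (TensorProduct.map aut.symm.toLinearMap Hb.comul) ∘ₗ coact =
      (TensorProduct.assoc k N H H).toLinearMap ∘ₗ
        (TensorProduct.map coact Hb.aut.symm.toLinearMap) ∘ₗ coact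
  counit :
    (TensorProduct.rid k N).toLinearMap ∘ₗ (TensorProduct.map LinearMap.id Hb.counit) ∘ₗ coact =
      aut.symm.toLinearMap
  coact_aut :
    coact ∘ₗ aut.toLinearMap = (TensorProduct.map aut.toLinearMap Hb.aut.toLinearMap) ∘ₗ coact
  compat :
    coact ∘ₗ TensorProduct.lift act =
      (TensorProduct.map (TensorProduct.lift act) (TensorProduct.lift Hb.mul)) ∘ₗ
        (TensorProduct.tensorTensorTensorComm k N H A H).toLinearMap ∘ₗ
          (TensorProduct.map coact Ac.coact)

/-- A left-right (H,A)-Hom-Hopf module. -/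
structure LRHomHopfModule {Hb : MonoidalHomBialgebra k H} (Ac : HomComoduleAlgebra Hb A)
    (N : Type) [AddCommGroup N] [Module k N] where
  act : A →ₗ[k] N →ₗ[k] N
  aut : N ≃ₗ[k] N
  act_act : ∀ n a b, act (Ac.aut a) (act b n) = act (Ac.mul a b) (aut n)
  act_one : ∀ n, act Ac.one n = aut n
  aut_act : ∀ n a, aut (act a n) = act (Ac.aut a) (aut n)
  coact : N →ₗ[k] N ⊗[k] H
  coassoc :
    (TensorProduct.map aut.symm.toLinearMap Hb.comul) ∘ₗ coact =
      (TensorProduct.assoc k N H H).toLinearMap ∘ₗ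
        (TensorProduct.map coact Hb.aut.symm.toLinearMap) ∘ₗ coact
  counit :
    (TensorProduct.rid k N).toLinearMap ∘ₗ (TensorProduct.map LinearMap.id Hb.counit) ∘ₗ coact =
      aut.symm.toLinearMap
  coact_aut :
    coact ∘ₗ aut.toLinearMap = (TensorProduct.map aut.toLinearMap Hb.aut.toLinearMap) ∘ₗ coact
  compat :
    coact ∘ₗ TensorProduct.lift act =
      (TensorProduct.map (TensorProduct.lift act) (TensorProduct.lift Hb.mul)) ∘ₗ
        (TensorProduct.tensorTensorTensorComm k A H N H).toLinearMap ∘ₗ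
          (TensorProduct.map Ac.coact coact)

/-- Coinvariants (as a set) of a coaction `coact` with structure automorphism `autM`. -/
def coinvSetOf {M : Type} [AddCommGroup M] [Module k M] (oneH : H)
    (coact : M →ₗ[k] M ⊗[k] H) (autM : M ≃ₗ[k] M) : Set M :=
  {m | coact m = autM.symm m ⊗ₜ[k] oneH}

/-- Coinvariants as a submodule. -/
def coinvSubmoduleOf {M : Type} [AddCommGroup M] [Module k M] (oneH : H)
    (coact : M →ₗ[k] M ⊗[k] H) (autM : M ≃ₗ[k] M) : Submodule k M :=
  LinearMap.ker (coact - ((TensorProduct.mk k M H).flip oneH) ∘ₗ autM.symm.toLinearMap)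

/-- The coinvariants `B = A^{co H}` of a Hom-comodule algebra. -/
def coinvA {Hb : MonoidalHomBialgebra k H} (Ac : HomComoduleAlgebra Hb A) : Set A :=
  coinvSetOf Hb.one Ac.coact Ac.aut

/-- The defining relations of the tensor product `M ⊗_B A` for a right `B`-Hom-module `M`. -/
def relSubR {M : Type} [AddCommGroup M] [Module k M]
    (mulA : A →ₗ[k] A →ₗ[k] A) (autA : A ≃ₗ[k] A) (Bset : Set A)
    (act : M →ₗ[k] A →ₗ[k] M) (autM : M ≃ₗ[k] M) : Submodule k (M ⊗[k] A) :=
  Submodule.span k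
    {x | ∃ m a b, b ∈ Bset ∧ x = act m b ⊗ₜ[k] autA a - autM m ⊗ₜ[k] mulA b a}

/-- The defining relations of the tensor product `A ⊗_B M` for a left `B`-Hom-module `M`. -/
def relSubL {M : Type} [AddCommGroup M] [Module k M]
    (mulA : A →ₗ[k] A →ₗ[k] A) (autA : A ≃ₗ[k] A) (Bset : Set A)
    (act : A →ₗ[k] M →ₗ[k] M) (autM : M ≃ₗ[k] M) : Submodule k (A ⊗[k] M) :=
  Submodule.span k
    {x | ∃ a m b, b ∈ Bset ∧ x = autA a ⊗ₜ[k] act b m - mulA a b ⊗ₜ[k] autM m}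

/-- The cotensor product `X □_H V` of a right Hom-comodule and a left Hom-comodule,
as a submodule of `X ⊗ V`. -/
def cotensorSub {X V : Type} [AddCommGroup X] [Module k X] [AddCommGroup V] [Module k V]
    (coactX : X →ₗ[k] X ⊗[k] H) (autX : X ≃ₗ[k] X)
    (coactV : V →ₗ[k] H ⊗[k] V) (autV : V ≃ₗ[k] V) : Submodule k (X ⊗[k] V) :=
  LinearMap.ker
    ((TensorProduct.map coactX autV.symm.toLinearMap) -
      ((TensorProduct.assoc k X H V).symm.toLinearMap ∘ₗ
        TensorProduct.map autX.symm.toLinearMap coactV))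

/-- The canonical Galois map at the level of `A ⊗ A`:
`a ⊗ b ↦ β⁻¹(a)·b₍₀₎ ⊗ α(b₍₁₎)`. -/
def canPreLin {Hb : MonoidalHomBialgebra k H} (Ac : HomComoduleAlgebra Hb A) :
    A ⊗[k] A →ₗ[k] A ⊗[k] H :=
  (TensorProduct.map (TensorProduct.lift Ac.mul) Hb.aut.toLinearMap) ∘ₗ
    (TensorProduct.assoc k A A H).symm.toLinearMap ∘ₗ
      (TensorProduct.map Ac.aut.symm.toLinearMap Ac.coact)

/-- The second canonical Galois map at the level of `A ⊗ A`:
`a ⊗ b ↦ a₍₀₎·β⁻¹(b) ⊗ α(a₍₁₎)`. -/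
def canPreLin' {Hb : MonoidalHomBialgebra k H} (Ac : HomComoduleAlgebra Hb A) :
    A ⊗[k] A →ₗ[k] A ⊗[k] H :=
  (TensorProduct.map (TensorProduct.lift Ac.mul) Hb.aut.toLinearMap) ∘ₗ
    (TensorProduct.assoc k A A H).symm.toLinearMap ∘ₗ
      (TensorProduct.map LinearMap.id (TensorProduct.comm k H A).toLinearMap) ∘ₗ
        (TensorProduct.assoc k A H A).toLinearMap ∘ₗ
          (TensorProduct.map Ac.coact Ac.aut.symm.toLinearMap)

/-- `φ : H → A` is a total integral. -/
def IsTotalIntegral {Hb : MonoidalHomBialgebra k H} (Ac : HomComoduleAlgebra Hb A)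
    (φ : H →ₗ[k] A) : Prop :=
  φ ∘ₗ Hb.aut.toLinearMap = Ac.aut.toLinearMap ∘ₗ φ ∧
    Ac.coact ∘ₗ φ = (TensorProduct.map φ LinearMap.id) ∘ₗ Hb.comul ∧
      φ Hb.one = Ac.one

/-- The Hom-comodule structure on `M ⊗ A` inducing that of `M ⊗_B A`:
`m ⊗ a ↦ (μ⁻¹(m) ⊗ a₍₀₎) ⊗ α(a₍₁₎)`. -/
def quotCoactPreR {Hb : MonoidalHomBialgebra k H} (Ac : HomComoduleAlgebra Hb A)
    {M : Type} [AddCommGroup M] [Module k M] (autM : M ≃ₗ[k] M) :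
    (M ⊗[k] A) →ₗ[k] (M ⊗[k] A) ⊗[k] H :=
  (TensorProduct.assoc k M A H).symm.toLinearMap ∘ₗ
    TensorProduct.map autM.symm.toLinearMap
      ((TensorProduct.map LinearMap.id Hb.aut.toLinearMap) ∘ₗ Ac.coact)

/-- The Hom-comodule structure on `A ⊗ M` inducing that of `A ⊗_B M`:
`a ⊗ m ↦ (a₍₀₎ ⊗ μ⁻¹(m)) ⊗ α(a₍₁₎)`. -/
def quotCoactPreL {Hb : MonoidalHomBialgebra k H} (Ac : HomComoduleAlgebra Hb A)
    {M : Type} [AddCommGroup M] [Module k M] (autM : M ≃ₗ[k] M) :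
    (A ⊗[k] M) →ₗ[k] (A ⊗[k] M) ⊗[k] H :=
  (TensorProduct.assoc k A M H).symm.toLinearMap ∘ₗ
    (TensorProduct.map LinearMap.id (TensorProduct.comm k H M).toLinearMap) ∘ₗ
      (TensorProduct.assoc k A H M).toLinearMap ∘ₗ
        TensorProduct.map
          ((TensorProduct.map LinearMap.id Hb.aut.toLinearMap) ∘ₗ Ac.coact)
          autM.symm.toLinearMap

/-- Bijectivity of the adjunction unit `η_M : M → (M ⊗_B A)^{co H}`, `m ↦ μ⁻¹(m) ⊗ 1_A`,
for a right `B`-Hom-module `M`.  Since the Hom-comodule structure of `M ⊗_B A` is the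
one induced from `M ⊗ A`, it is quantified over all maps `ρbar` (resp. `θ`) induced by
the comodule structure (resp. by `μ⁻¹ ⊗ β⁻¹`) on `M ⊗ A`. -/
def UnitBijectiveR {Hb : MonoidalHomBialgebra k H} (Ac : HomComoduleAlgebra Hb A)
    (Bset : Set A) {M : Type} [AddCommGroup M] [Module k M]
    (S : HomModuleOn Ac Bset M) : Prop :=
  ∀ (ρbar : ((M ⊗[k] A) ⧸ relSubR Ac.mul Ac.aut Bset S.act S.aut) →ₗ[k]
      ((M ⊗[k] A) ⧸ relSubR Ac.mul Ac.aut Bset S.act S.aut) ⊗[k] H)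
    (θ : ((M ⊗[k] A) ⧸ relSubR Ac.mul Ac.aut Bset S.act S.aut) →ₗ[k]
      ((M ⊗[k] A) ⧸ relSubR Ac.mul Ac.aut Bset S.act S.aut)),
    ρbar ∘ₗ (relSubR Ac.mul Ac.aut Bset S.act S.aut).mkQ =
      (TensorProduct.map (relSubR Ac.mul Ac.aut Bset S.act S.aut).mkQ LinearMap.id) ∘ₗ
        quotCoactPreR Ac S.aut →
    θ ∘ₗ (relSubR Ac.mul Ac.aut Bset S.act S.aut).mkQ =
      (relSubR Ac.mul Ac.aut Bset S.act S.aut).mkQ ∘ₗ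
        TensorProduct.map S.aut.symm.toLinearMap Ac.aut.symm.toLinearMap →
    ((∀ m : M, ρbar ((relSubR Ac.mul Ac.aut Bset S.act S.aut).mkQ (S.aut.symm m ⊗ₜ[k] Ac.one)) =
        θ ((relSubR Ac.mul Ac.aut Bset S.act S.aut).mkQ (S.aut.symm m ⊗ₜ[k] Ac.one)) ⊗ₜ[k] Hb.one) ∧
      Function.Injective
        (fun m : M => (relSubR Ac.mul Ac.aut Bset S.act S.aut).mkQ (S.aut.symm m ⊗ₜ[k] Ac.one)) ∧
      ∀ x, ρbar x = θ x ⊗ₜ[k] Hb.one →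
        ∃ m : M, (relSubR Ac.mul Ac.aut Bset S.act S.aut).mkQ (S.aut.symm m ⊗ₜ[k] Ac.one) = x)

/-- The relations of `N^{co H} ⊗_B A` for a right (H,A)-Hom-Hopf module `N`;
the closure of the coinvariants under the `B`-action and the automorphism is
encoded by existential membership. -/
def relCoinvR {Hb : MonoidalHomBialgebra k H} (Ac : HomComoduleAlgebra Hb A)
    (Bset : Set A) {N : Type} [AddCommGroup N] [Module k N]
    (P : HomHopfModule Ac N) :
    Submodule k ((coinvSubmoduleOf Hb.one P.coact P.aut : Submodule k N) ⊗[k] A) :=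
  Submodule.span k
    {x | ∃ (n n' n'' : coinvSubmoduleOf Hb.one P.coact P.aut) (a b : A), b ∈ Bset ∧
      (n' : N) = P.act n b ∧ (n'' : N) = P.aut n ∧
      x = n' ⊗ₜ[k] Ac.aut a - n'' ⊗ₜ[k] Ac.mul b a}

/-- The counit of the adjunction at the level of `N^{co H} ⊗ A`: `n ⊗ a ↦ n · a`. -/
def counitPre {Hb : MonoidalHomBialgebra k H} (Ac : HomComoduleAlgebra Hb A)
    {N : Type} [AddCommGroup N] [Module k N] (P : HomHopfModule Ac N) :
    ((coinvSubmoduleOf Hb.one P.coact P.aut : Submodule k N) ⊗[k] A) →ₗ[k] N :=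
  TensorProduct.lift (P.act ∘ₗ (coinvSubmoduleOf Hb.one P.coact P.aut).subtype)

/-- Bijectivity of the adjunction counit `ε_N : N^{co H} ⊗_B A → N`, `n ⊗ a ↦ n·a`:
equivalently, the lift `N^{co H} ⊗ A → N` is surjective and its kernel is exactly
the defining relations of `⊗_B`. -/
def CounitBijectiveR {Hb : MonoidalHomBialgebra k H} (Ac : HomComoduleAlgebra Hb A)
    (Bset : Set A) {N : Type} [AddCommGroup N] [Module k N]
    (P : HomHopfModule Ac N) : Prop :=
  Function.Surjective (counitPre Ac P) ∧ LinearMap.ker (counitPre Ac P) = relCoinvR Ac Bset P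

/-- Bijectivity of the adjunction unit `η'_M : M → (A ⊗_B M)^{co H}`, `m ↦ 1_A ⊗ μ⁻¹(m)`,
for a left `B`-Hom-module `M`. -/
def UnitBijectiveL {Hb : MonoidalHomBialgebra k H} (Ac : HomComoduleAlgebra Hb A)
    (Bset : Set A) {M : Type} [AddCommGroup M] [Module k M]
    (S : HomLeftModuleOn Ac Bset M) : Prop :=
  ∀ (ρbar : ((A ⊗[k] M) ⧸ relSubL Ac.mul Ac.aut Bset S.act S.aut) →ₗ[k]
      ((A ⊗[k] M) ⧸ relSubL Ac.mul Ac.aut Bset S.act S.aut) ⊗[k] H)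
    (θ : ((A ⊗[k] M) ⧸ relSubL Ac.mul Ac.aut Bset S.act S.aut) →ₗ[k]
      ((A ⊗[k] M) ⧸ relSubL Ac.mul Ac.aut Bset S.act S.aut)),
    ρbar ∘ₗ (relSubL Ac.mul Ac.aut Bset S.act S.aut).mkQ =
      (TensorProduct.map (relSubL Ac.mul Ac.aut Bset S.act S.aut).mkQ LinearMap.id) ∘ₗ
        quotCoactPreL Ac S.aut →
    θ ∘ₗ (relSubL Ac.mul Ac.aut Bset S.act S.aut).mkQ =
      (relSubL Ac.mul Ac.aut Bset S.act S.aut).mkQ ∘ₗ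
        TensorProduct.map Ac.aut.symm.toLinearMap S.aut.symm.toLinearMap →
    ((∀ m : M, ρbar ((relSubL Ac.mul Ac.aut Bset S.act S.aut).mkQ (Ac.one ⊗ₜ[k] S.aut.symm m)) =
        θ ((relSubL Ac.mul Ac.aut Bset S.act S.aut).mkQ (Ac.one ⊗ₜ[k] S.aut.symm m)) ⊗ₜ[k] Hb.one) ∧
      Function.Injective
        (fun m : M => (relSubL Ac.mul Ac.aut Bset S.act S.aut).mkQ (Ac.one ⊗ₜ[k] S.aut.symm m)) ∧
      ∀ x, ρbar x = θ x ⊗ₜ[k] Hb.one →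
        ∃ m : M, (relSubL Ac.mul Ac.aut Bset S.act S.aut).mkQ (Ac.one ⊗ₜ[k] S.aut.symm m) = x)

/-- The relations of `A ⊗_B N^{co H}` for a left-right (H,A)-Hom-Hopf module `N`. -/
def relCoinvL {Hb : MonoidalHomBialgebra k H} (Ac : HomComoduleAlgebra Hb A)
    (Bset : Set A) {N : Type} [AddCommGroup N] [Module k N]
    (P : LRHomHopfModule Ac N) :
    Submodule k (A ⊗[k] (coinvSubmoduleOf Hb.one P.coact P.aut : Submodule k N)) :=
  Submodule.span k
    {x | ∃ (n n' n'' : coinvSubmoduleOf Hb.one P.coact P.aut) (a b : A), b ∈ Bset ∧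
      (n' : N) = P.act b n ∧ (n'' : N) = P.aut n ∧
      x = Ac.aut a ⊗ₜ[k] n' - Ac.mul a b ⊗ₜ[k] n''}

/-- The counit at the level of `A ⊗ N^{co H}`: `a ⊗ n ↦ a · n`. -/
def counitPreL {Hb : MonoidalHomBialgebra k H} (Ac : HomComoduleAlgebra Hb A)
    {N : Type} [AddCommGroup N] [Module k N] (P : LRHomHopfModule Ac N) :
    (A ⊗[k] (coinvSubmoduleOf Hb.one P.coact P.aut : Submodule k N)) →ₗ[k] N :=
  TensorProduct.lift (P.act.compl₂ (coinvSubmoduleOf Hb.one P.coact P.aut).subtype)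

/-- Bijectivity of the counit `ε'_N : A ⊗_B N^{co H} → N`. -/
def CounitBijectiveL {Hb : MonoidalHomBialgebra k H} (Ac : HomComoduleAlgebra Hb A)
    (Bset : Set A) {N : Type} [AddCommGroup N] [Module k N]
    (P : LRHomHopfModule Ac N) : Prop :=
  Function.Surjective (counitPreL Ac P) ∧ LinearMap.ker (counitPreL Ac P) = relCoinvL Ac Bset P

/-- A morphism of right `B`-Hom-modules. -/
def IsHomModuleOnHomR {Hb : MonoidalHomBialgebra k H} (Ac : HomComoduleAlgebra Hb A)
    (Bset : Set A) {M₁ M₂ : Type} [AddCommGroup M₁] [Module k M₁] [AddCommGroup M₂] [Module k M₂]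
    (S₁ : HomModuleOn Ac Bset M₁) (S₂ : HomModuleOn Ac Bset M₂) (f : M₁ →ₗ[k] M₂) : Prop :=
  (∀ m, ∀ b ∈ Bset, f (S₁.act m b) = S₂.act (f m) b) ∧ ∀ m, f (S₁.aut m) = S₂.aut (f m)

/-- A morphism of left `B`-Hom-modules. -/
def IsHomModuleOnHomL {Hb : MonoidalHomBialgebra k H} (Ac : HomComoduleAlgebra Hb A)
    (Bset : Set A) {M₁ M₂ : Type} [AddCommGroup M₁] [Module k M₁] [AddCommGroup M₂] [Module k M₂]
    (S₁ : HomLeftModuleOn Ac Bset M₁) (S₂ : HomLeftModuleOn Ac Bset M₂) (f : M₁ →ₗ[k] M₂) : Prop :=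
  (∀ m, ∀ b ∈ Bset, f (S₁.act b m) = S₂.act b (f m)) ∧ ∀ m, f (S₁.aut m) = S₂.aut (f m)

/-- `A` is faithfully flat as a left `B`-Hom-module: the induced functor `− ⊗_B A`
on right `B`-Hom-modules preserves and reflects exactness. -/
def FaithfullyFlatLeftOf {Hb : MonoidalHomBialgebra k H} (Ac : HomComoduleAlgebra Hb A)
    (Bset : Set A) : Prop :=
  ∀ (M₁ M₂ M₃ : Type) [AddCommGroup M₁] [Module k M₁] [AddCommGroup M₂] [Module k M₂]
    [AddCommGroup M₃] [Module k M₃]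
    (S₁ : HomModuleOn Ac Bset M₁) (S₂ : HomModuleOn Ac Bset M₂) (S₃ : HomModuleOn Ac Bset M₃)
    (f : M₁ →ₗ[k] M₂) (g : M₂ →ₗ[k] M₃),
    IsHomModuleOnHomR Ac Bset S₁ S₂ f → IsHomModuleOnHomR Ac Bset S₂ S₃ g →
    ∀ (fbar : ((M₁ ⊗[k] A) ⧸ relSubR Ac.mul Ac.aut Bset S₁.act S₁.aut) →ₗ[k]
        ((M₂ ⊗[k] A) ⧸ relSubR Ac.mul Ac.aut Bset S₂.act S₂.aut))
      (gbar : ((M₂ ⊗[k] A) ⧸ relSubR Ac.mul Ac.aut Bset S₂.act S₂.aut) →ₗ[k]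
        ((M₃ ⊗[k] A) ⧸ relSubR Ac.mul Ac.aut Bset S₃.act S₃.aut)),
      fbar ∘ₗ (relSubR Ac.mul Ac.aut Bset S₁.act S₁.aut).mkQ =
        (relSubR Ac.mul Ac.aut Bset S₂.act S₂.aut).mkQ ∘ₗ TensorProduct.map f LinearMap.id →
      gbar ∘ₗ (relSubR Ac.mul Ac.aut Bset S₂.act S₂.aut).mkQ =
        (relSubR Ac.mul Ac.aut Bset S₃.act S₃.aut).mkQ ∘ₗ TensorProduct.map g LinearMap.id →
      (LinearMap.range f = LinearMap.ker g ↔ LinearMap.range fbar = LinearMap.ker gbar)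

/-- `A` is faithfully flat as a right `B`-Hom-module: the induced functor `A ⊗_B −`
on left `B`-Hom-modules preserves and reflects exactness. -/
def FaithfullyFlatRightOf {Hb : MonoidalHomBialgebra k H} (Ac : HomComoduleAlgebra Hb A)
    (Bset : Set A) : Prop :=
  ∀ (M₁ M₂ M₃ : Type) [AddCommGroup M₁] [Module k M₁] [AddCommGroup M₂] [Module k M₂]
    [AddCommGroup M₃] [Module k M₃]
    (S₁ : HomLeftModuleOn Ac Bset M₁) (S₂ : HomLeftModuleOn Ac Bset M₂)
    (S₃ : HomLeftModuleOn Ac Bset M₃)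
    (f : M₁ →ₗ[k] M₂) (g : M₂ →ₗ[k] M₃),
    IsHomModuleOnHomL Ac Bset S₁ S₂ f → IsHomModuleOnHomL Ac Bset S₂ S₃ g →
    ∀ (fbar : ((A ⊗[k] M₁) ⧸ relSubL Ac.mul Ac.aut Bset S₁.act S₁.aut) →ₗ[k]
        ((A ⊗[k] M₂) ⧸ relSubL Ac.mul Ac.aut Bset S₂.act S₂.aut))
      (gbar : ((A ⊗[k] M₂) ⧸ relSubL Ac.mul Ac.aut Bset S₂.act S₂.aut) →ₗ[k]
        ((A ⊗[k] M₃) ⧸ relSubL Ac.mul Ac.aut Bset S₃.act S₃.aut)),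
      fbar ∘ₗ (relSubL Ac.mul Ac.aut Bset S₁.act S₁.aut).mkQ =
        (relSubL Ac.mul Ac.aut Bset S₂.act S₂.aut).mkQ ∘ₗ TensorProduct.map LinearMap.id f →
      gbar ∘ₗ (relSubL Ac.mul Ac.aut Bset S₂.act S₂.aut).mkQ =
        (relSubL Ac.mul Ac.aut Bset S₃.act S₃.aut).mkQ ∘ₗ TensorProduct.map LinearMap.id g →
      (LinearMap.range f = LinearMap.ker g ↔ LinearMap.range fbar = LinearMap.ker gbar)

/-- `A` is flat as a left `B`-Hom-module: `− ⊗_B A` preserves exactness. -/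
def FlatLeftOf {Hb : MonoidalHomBialgebra k H} (Ac : HomComoduleAlgebra Hb A)
    (Bset : Set A) : Prop :=
  ∀ (M₁ M₂ M₃ : Type) [AddCommGroup M₁] [Module k M₁] [AddCommGroup M₂] [Module k M₂]
    [AddCommGroup M₃] [Module k M₃]
    (S₁ : HomModuleOn Ac Bset M₁) (S₂ : HomModuleOn Ac Bset M₂) (S₃ : HomModuleOn Ac Bset M₃)
    (f : M₁ →ₗ[k] M₂) (g : M₂ →ₗ[k] M₃),
    IsHomModuleOnHomR Ac Bset S₁ S₂ f → IsHomModuleOnHomR Ac Bset S₂ S₃ g →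
    ∀ (fbar : ((M₁ ⊗[k] A) ⧸ relSubR Ac.mul Ac.aut Bset S₁.act S₁.aut) →ₗ[k]
        ((M₂ ⊗[k] A) ⧸ relSubR Ac.mul Ac.aut Bset S₂.act S₂.aut))
      (gbar : ((M₂ ⊗[k] A) ⧸ relSubR Ac.mul Ac.aut Bset S₂.act S₂.aut) →ₗ[k]
        ((M₃ ⊗[k] A) ⧸ relSubR Ac.mul Ac.aut Bset S₃.act S₃.aut)),
      fbar ∘ₗ (relSubR Ac.mul Ac.aut Bset S₁.act S₁.aut).mkQ =
        (relSubR Ac.mul Ac.aut Bset S₂.act S₂.aut).mkQ ∘ₗ TensorProduct.map f LinearMap.id →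
      gbar ∘ₗ (relSubR Ac.mul Ac.aut Bset S₂.act S₂.aut).mkQ =
        (relSubR Ac.mul Ac.aut Bset S₃.act S₃.aut).mkQ ∘ₗ TensorProduct.map g LinearMap.id →
      (LinearMap.range f = LinearMap.ker g → LinearMap.range fbar = LinearMap.ker gbar)

end

/-!
The twist puts one copy of `α` after every product and one copy of `α⁻¹` before every coproduct.
Since `α` is multiplicative and `α⁻¹` comultiplicative, these copies can be collected at one end:
Hom-associativity is `α²` applied to associativity, and Hom-coassociativity is coassociativity
precomposed with `α⁻²`. For the compatibility of `Δ'` with `∗`, one moves `α` past `Δ'` and `α⁻¹`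
past the product; what remains is the compatibility of `Δ` with the product, enclosed between
`α ⊗ α` and `α⁻¹ ⊗ α⁻¹`.
-/

section Twist

variable {R M N : Type*} [CommSemiring R] [AddCommMonoid M] [Module R M] [AddCommMonoid N]
  [Module R N]

/-- The product `a ∗ b = α (a b)`: the multiplication `mul` twisted by an endomorphism `α`. -/
def twistMul (α : M →ₗ[R] M) (mul : M →ₗ[R] M →ₗ[R] M) : M →ₗ[R] M →ₗ[R] M :=
  mul.compr₂ α

/-- The coproduct `x ↦ Δ (β x)`: the comultiplication `Δ` twisted by an endomorphism `β`. The
coproduct `Δ'` of `H_α` is the case `β = α⁻¹`. -/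
def twistComul (β : M →ₗ[R] M) (comul : M →ₗ[R] M ⊗[R] M) : M →ₗ[R] M ⊗[R] M :=
  comul ∘ₗ β

section Multiplicative

variable {mul : M →ₗ[R] M →ₗ[R] M} {mulN : N →ₗ[R] N →ₗ[R] N}

theorem lift_twistMul (α : M →ₗ[R] M) : lift (twistMul α mul) = α ∘ₗ lift mul :=
  lift_compr₂ α

theorem twistMul_hom_assoc {α : M →ₗ[R] M} (hα : ∀ a b, α (mul a b) = mul (α a) (α b))
    (hassoc : ∀ a b c, mul (mul a b) c = mul a (mul b c)) (a b c : M) :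
    twistMul α mul (α a) (twistMul α mul b c) = twistMul α mul (twistMul α mul a b) (α c) :=
  calc α (mul (α a) (α (mul b c)))
    _ = α (α (mul a (mul b c))) := by rw [hα a]
    _ = α (α (mul (mul a b) c)) := by rw [hassoc]
    _ = α (mul (α (mul a b)) (α c)) := by rw [hα (mul a b)]

theorem comp_lift_of_map_mul {φ : M →ₗ[R] N} (hφ : ∀ a b, φ (mul a b) = mulN (φ a) (φ b)) :
    φ ∘ₗ lift mul = lift mulN ∘ₗ map φ φ :=
  TensorProduct.ext' hφ

theorem symm_map_mul {e : M ≃ₗ[R] N} (he : ∀ a b, e (mul a b) = mulN (e a) (e b)) (a b : N) :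
    e.symm (mulN a b) = mul (e.symm a) (e.symm b) := by
  rw [LinearEquiv.symm_apply_eq, he, e.apply_symm_apply, e.apply_symm_apply]

end Multiplicative

section Comultiplicative

variable {comul : M →ₗ[R] M ⊗[R] M} {comulN : N →ₗ[R] N ⊗[R] N}

theorem comul_comp_symm {e : M ≃ₗ[R] N}
    (he : comulN ∘ₗ e.toLinearMap = map e.toLinearMap e.toLinearMap ∘ₗ comul) :
    comul ∘ₗ e.symm.toLinearMap = map e.symm.toLinearMap e.symm.toLinearMap ∘ₗ comulN := by
  change _ = (congr e e).symm.toLinearMap ∘ₗ comulN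
  rw [LinearEquiv.eq_toLinearMap_symm_comp, ← LinearMap.comp_assoc, toLinearMap_congr, ← he,
    LinearMap.comp_assoc, LinearEquiv.comp_symm, LinearMap.comp_id]

theorem twistComul_hom_coassoc {β : M →ₗ[R] M} (hβ : comul ∘ₗ β = map β β ∘ₗ comul)
    (hcoassoc : (TensorProduct.assoc R M M M).toLinearMap ∘ₗ map comul LinearMap.id ∘ₗ comul =
      map LinearMap.id comul ∘ₗ comul) :
    (TensorProduct.assoc R M M M).toLinearMap ∘ₗ
        map (twistComul β comul) β ∘ₗ twistComul β comul =
      map β (twistComul β comul) ∘ₗ twistComul β comul := by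
  have hleft : map (comul ∘ₗ β) β = map comul LinearMap.id ∘ₗ map β β := by
    rw [← map_comp, LinearMap.id_comp]
  have hright : map β (comul ∘ₗ β) = map LinearMap.id comul ∘ₗ map β β := by
    rw [← map_comp, LinearMap.id_comp]
  calc (TensorProduct.assoc R M M M).toLinearMap ∘ₗ map (comul ∘ₗ β) β ∘ₗ comul ∘ₗ β
    _ = (TensorProduct.assoc R M M M).toLinearMap ∘ₗ
          map comul LinearMap.id ∘ₗ (map β β ∘ₗ comul) ∘ₗ β := by rw [hleft]; rfl
    _ = ((TensorProduct.assoc R M M M).toLinearMap ∘ₗ map comul LinearMap.id ∘ₗ comul) ∘ₗ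
          β ∘ₗ β := by rw [← hβ]; rfl
    _ = map LinearMap.id comul ∘ₗ (comul ∘ₗ β) ∘ₗ β := by rw [hcoassoc]; rfl
    _ = map LinearMap.id comul ∘ₗ (map β β ∘ₗ comul) ∘ₗ β := by rw [hβ]
    _ = map β (comul ∘ₗ β) ∘ₗ comul ∘ₗ β := by rw [hright]; rfl

theorem lid_comp_map_counit_comp_twistComul {counit : M →ₗ[R] R}
    (hcounit : (TensorProduct.lid R M).toLinearMap ∘ₗ map counit LinearMap.id ∘ₗ comul =
      LinearMap.id) (β : M →ₗ[R] M) :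
    (TensorProduct.lid R M).toLinearMap ∘ₗ map counit LinearMap.id ∘ₗ twistComul β comul = β :=
  congrArg (· ∘ₗ β) hcounit

theorem rid_comp_map_counit_comp_twistComul {counit : M →ₗ[R] R}
    (hcounit : (TensorProduct.rid R M).toLinearMap ∘ₗ map LinearMap.id counit ∘ₗ comul =
      LinearMap.id) (β : M →ₗ[R] M) :
    (TensorProduct.rid R M).toLinearMap ∘ₗ map LinearMap.id counit ∘ₗ twistComul β comul = β :=
  congrArg (· ∘ₗ β) hcounit

theorem twistComul_comp {α β : M →ₗ[R] M} (hα : comul ∘ₗ α = map α α ∘ₗ comul)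
    (hαβ : α ∘ₗ β = β ∘ₗ α) :
    twistComul β comul ∘ₗ α = map α α ∘ₗ twistComul β comul :=
  calc comul ∘ₗ β ∘ₗ α
    _ = (comul ∘ₗ α) ∘ₗ β := by rw [← hαβ]; rfl
    _ = map α α ∘ₗ comul ∘ₗ β := by rw [hα]; rfl

end Comultiplicative

theorem twistComul_comp_lift_twistMul {mul : M →ₗ[R] M →ₗ[R] M} {comul : M →ₗ[R] M ⊗[R] M}
    {α β : M →ₗ[R] M} (hα : comul ∘ₗ α = map α α ∘ₗ comul)
    (hβ : ∀ a b, β (mul a b) = mul (β a) (β b)) (hαβ : α ∘ₗ β = β ∘ₗ α)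
    (hcomul_mul : comul ∘ₗ lift mul = map (lift mul) (lift mul) ∘ₗ
      (tensorTensorTensorComm R M M M M).toLinearMap ∘ₗ map comul comul) :
    twistComul β comul ∘ₗ lift (twistMul α mul) =
      map (lift (twistMul α mul)) (lift (twistMul α mul)) ∘ₗ
        (tensorTensorTensorComm R M M M M).toLinearMap ∘ₗ
          map (twistComul β comul) (twistComul β comul) := by
  rw [lift_twistMul]
  calc twistComul β comul ∘ₗ α ∘ₗ lift mul
    _ = map α α ∘ₗ comul ∘ₗ β ∘ₗ lift mul := congrArg (· ∘ₗ lift mul) (twistComul_comp hα hαβ)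
    _ = map α α ∘ₗ (comul ∘ₗ lift mul) ∘ₗ map β β := by rw [comp_lift_of_map_mul hβ]; rfl
    _ = (map α α ∘ₗ map (lift mul) (lift mul)) ∘ₗ
          (tensorTensorTensorComm R M M M M).toLinearMap ∘ₗ map comul comul ∘ₗ map β β := by
      rw [hcomul_mul]; rfl
    _ = map (α ∘ₗ lift mul) (α ∘ₗ lift mul) ∘ₗ
          (tensorTensorTensorComm R M M M M).toLinearMap ∘ₗ
            map (twistComul β comul) (twistComul β comul) := by
      rw [← map_comp, ← map_comp]; rfl

end Twist

/-! STATEMENT 0: Twisting an ordinary bialgebra by a bialgebra automorphism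
yields a monoidal Hom-bialgebra `H_α`. -/
theorem statement0
    (k : Type) [Field k] (H : Type) [AddCommGroup H] [Module k H]
    (mul : H →ₗ[k] H →ₗ[k] H) (one : H)
    (comul : H →ₗ[k] H ⊗[k] H) (counit : H →ₗ[k] k)
    -- ordinary (associative, unital) algebra axioms
    (hassoc : ∀ a b c, mul (mul a b) c = mul a (mul b c))
    (hmul_one : ∀ a, mul a one = a) (hone_mul : ∀ a, mul one a = a)
    -- ordinary (coassociative, counital) coalgebra axioms
    (hcoassoc :
      (TensorProduct.assoc k H H H).toLinearMap ∘ₗ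
          (TensorProduct.map comul LinearMap.id) ∘ₗ comul =
        (TensorProduct.map LinearMap.id comul) ∘ₗ comul)
    (hcounit_left :
      (TensorProduct.lid k H).toLinearMap ∘ₗ (TensorProduct.map counit LinearMap.id) ∘ₗ comul =
        LinearMap.id)
    (hcounit_right :
      (TensorProduct.rid k H).toLinearMap ∘ₗ (TensorProduct.map LinearMap.id counit) ∘ₗ comul =
        LinearMap.id)
    -- bialgebra axioms: Δ and ε are algebra maps
    (hcomul_mul :
      comul ∘ₗ TensorProduct.lift mul =
        (TensorProduct.map (TensorProduct.lift mul) (TensorProduct.lift mul)) ∘ₗ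
          (TensorProduct.tensorTensorTensorComm k H H H H).toLinearMap ∘ₗ
            (TensorProduct.map comul comul))
    (hcomul_one : comul one = one ⊗ₜ[k] one)
    (hcounit_mul : ∀ a b, counit (mul a b) = counit a * counit b)
    (hcounit_one : counit one = 1)
    -- α is a bialgebra automorphism
    (α : H ≃ₗ[k] H)
    (hα_mul : ∀ a b, α (mul a b) = mul (α a) (α b))
    (hα_one : α one = one)
    (hα_comul : comul ∘ₗ α.toLinearMap = (TensorProduct.map α.toLinearMap α.toLinearMap) ∘ₗ comul)
    (hα_counit : counit ∘ₗ α.toLinearMap = counit) :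
    ∃ Hb : MonoidalHomBialgebra k H,
      (∀ a b, Hb.mul a b = α (mul a b)) ∧
      Hb.one = one ∧
      Hb.comul = comul ∘ₗ α.symm.toLinearMap ∧
      Hb.counit = counit ∧
      Hb.aut = α := by
  have hα_symm : α.toLinearMap ∘ₗ α.symm.toLinearMap = α.symm.toLinearMap ∘ₗ α.toLinearMap :=
    α.comp_symm.trans α.symm_comp.symm
  have hα_symm_one : α.symm one = one := α.symm_apply_eq.mpr hα_one.symm
  exact ⟨{
    mul := twistMul α.toLinearMap mul
    one := one
    comul := twistComul α.symm.toLinearMap comul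
    counit := counit
    aut := α
    hom_assoc := twistMul_hom_assoc hα_mul hassoc
    mulOne := fun a => congrArg α (hmul_one a)
    oneMul := fun a => congrArg α (hone_mul a)
    aut_mul := fun a b => congrArg α (hα_mul a b)
    aut_one := hα_one
    coassoc := twistComul_hom_coassoc (comul_comp_symm hα_comul) hcoassoc
    counit_left := lid_comp_map_counit_comp_twistComul hcounit_left _
    counit_right := rid_comp_map_counit_comp_twistComul hcounit_right _
    comul_aut := twistComul_comp hα_comul hα_symm
    counit_aut := hα_counit
    comul_mul := twistComul_comp_lift_twistMul hα_comul (symm_map_mul hα_mul) hα_symm hcomul_mul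
    comul_one := (congrArg comul hα_symm_one).trans hcomul_one
    counit_mul := fun a b => (LinearMap.congr_fun hα_counit (mul a b)).trans (hcounit_mul a b)
    counit_one := hcounit_one }, fun _ _ => rfl, rfl, rfl, rfl, rfl⟩
end

section
/- Let H be a bialgebra over a field k, α: H → H a bialgebra automorphism, and (A, m_A, ρ) a right H-comodule algebra (so ρ:A→A⊗H is a coassociative counital coaction that is an algebra map). Let β: A → A be an algebra automorphism satisfying ρ∘β = (β⊗α)∘ρ. Then A_β = (A, β, m_β, ρ_β), where m_β(a⊗b)=β(ab) and ρ_β = ρ∘β⁻¹, is a right (H_α, α)-Hom-comodule algebra over the monoidal Hom-bialgebra H_α = (H, α, α∘m, η, Δ∘α⁻¹, ε): (A, β, m_β) is a monoidal Hom-algebra, (A, β, ρ_β) is a right (H_α,α)-Hom-comodule, and ρ_β(m_β(a⊗b)) = ρ_β(a)ρ_β(b) (product taken in A_β ⊗ H_α) with ρ_β(1_A)=1_A⊗1_H. -/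
open TensorProduct

/-!
An ordinary bialgebra is a monoidal Hom-bialgebra whose structure automorphism is the identity, and
likewise for comodule algebras, so it suffices to twist Hom-structures. If the coaction `ρ`
satisfies `ρ ∘ β = (β ⊗ α) ∘ ρ`, then
`(f ∘ β⁻¹ ⊗ g ∘ α⁻¹) ∘ (ρ ∘ β⁻¹) = (f ⊗ g) ∘ ρ ∘ β⁻²` for all linear `f` and `g`, which turns the
coassociativity of `ρ` into that of `ρ ∘ β⁻¹`. The coalgebra axioms of `H_α` are the instance in
which `H` coacts on itself by its comultiplication.
-/

section Mul

variable {R M : Type*} [CommSemiring R] [AddCommMonoid M] [Module R M]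
  {mul : M →ₗ[R] M →ₗ[R] M} {φ ψ : M →ₗ[R] M}

theorem comp_comm_of_mul_one {one : M} (hmul_one : ∀ a, mul a one = ψ a)
    (hφ_mul : ∀ a b, φ (mul a b) = mul (φ a) (φ b)) (hφ_one : φ one = one) :
    φ ∘ₗ ψ = ψ ∘ₗ φ := by
  ext a
  simp only [LinearMap.comp_apply, ← hmul_one, hφ_mul, hφ_one]

theorem compr₂_hom_assoc (hassoc : ∀ a b c, mul (ψ a) (mul b c) = mul (mul a b) (ψ c))
    (hφ_mul : ∀ a b, φ (mul a b) = mul (φ a) (φ b)) (a b c : M) :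
    mul.compr₂ φ (φ (ψ a)) (mul.compr₂ φ b c) = mul.compr₂ φ (mul.compr₂ φ a b) (φ (ψ c)) := by
  simp only [LinearMap.compr₂_apply, ← hφ_mul, hassoc]

theorem comp_apply_compr₂ (hcomm : φ ∘ₗ ψ = ψ ∘ₗ φ)
    (hφ_mul : ∀ a b, φ (mul a b) = mul (φ a) (φ b))
    (hψ_mul : ∀ a b, ψ (mul a b) = mul (ψ a) (ψ b)) (a b : M) :
    φ (ψ (mul.compr₂ φ a b)) = mul.compr₂ φ (φ (ψ a)) (φ (ψ b)) := by
  have hψφ (x : M) : ψ (φ x) = φ (ψ x) := (LinearMap.congr_fun hcomm x).symm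
  simp only [LinearMap.compr₂_apply, hψφ, hψ_mul, hφ_mul]

theorem lift_compr₂_eq_lift_comp_map (hφ_mul : ∀ a b, φ (mul a b) = mul (φ a) (φ b)) :
    lift (mul.compr₂ φ) = lift mul ∘ₗ map φ φ :=
  TensorProduct.ext' fun a b => by
    simp only [lift.tmul, LinearMap.compr₂_apply, LinearMap.comp_apply, map_tmul, hφ_mul]

end Mul

section Coaction

variable {R M N : Type*} [CommSemiring R] [AddCommMonoid M] [Module R M]
  [AddCommMonoid N] [Module R N]
  {ρ : M →ₗ[R] M ⊗[R] N} {β μ : M ≃ₗ[R] M} {α γ : N ≃ₗ[R] N}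

theorem map_symm_comp_of_equivariant
    (hβ : ρ ∘ₗ β.toLinearMap = map β.toLinearMap α.toLinearMap ∘ₗ ρ) :
    map β.symm.toLinearMap α.symm.toLinearMap ∘ₗ ρ = ρ ∘ₗ β.symm.toLinearMap := by
  rw [LinearEquiv.eq_comp_toLinearMap_symm, LinearMap.comp_assoc, hβ, ← LinearMap.comp_assoc,
    ← map_comp]
  simp only [LinearEquiv.symm_comp, map_id, LinearMap.id_comp]

theorem map_comp_symm_comp_of_equivariant {P Q : Type*} [AddCommMonoid P] [Module R P]
    [AddCommMonoid Q] [Module R Q]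
    (hβ : ρ ∘ₗ β.toLinearMap = map β.toLinearMap α.toLinearMap ∘ₗ ρ)
    (f : M →ₗ[R] P) (g : N →ₗ[R] Q) :
    map (f ∘ₗ β.symm.toLinearMap) (g ∘ₗ α.symm.toLinearMap) ∘ₗ ρ ∘ₗ β.symm.toLinearMap =
      (map f g ∘ₗ ρ) ∘ₗ β.symm.toLinearMap ∘ₗ β.symm.toLinearMap := by
  rw [map_comp, LinearMap.comp_assoc, ← LinearMap.comp_assoc _ ρ, map_symm_comp_of_equivariant hβ]
  rfl

theorem hom_coassoc_comp_symm {comul : N →ₗ[R] N ⊗[R] N}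
    (hβ : ρ ∘ₗ β.toLinearMap = map β.toLinearMap α.toLinearMap ∘ₗ ρ)
    (hcoassoc : map μ.symm.toLinearMap comul ∘ₗ ρ =
      (TensorProduct.assoc R M N N).toLinearMap ∘ₗ map ρ γ.symm.toLinearMap ∘ₗ ρ) :
    map (μ.symm.toLinearMap ∘ₗ β.symm.toLinearMap) (comul ∘ₗ α.symm.toLinearMap) ∘ₗ
        ρ ∘ₗ β.symm.toLinearMap =
      (TensorProduct.assoc R M N N).toLinearMap ∘ₗ
        map (ρ ∘ₗ β.symm.toLinearMap) (γ.symm.toLinearMap ∘ₗ α.symm.toLinearMap) ∘ₗ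
          ρ ∘ₗ β.symm.toLinearMap := by
  rw [map_comp_symm_comp_of_equivariant hβ, map_comp_symm_comp_of_equivariant hβ, hcoassoc]
  rfl

theorem comp_symm_equivariant_comp
    (hcomm : β.toLinearMap ∘ₗ μ.toLinearMap = μ.toLinearMap ∘ₗ β.toLinearMap)
    (hβ : ρ ∘ₗ β.toLinearMap = map β.toLinearMap α.toLinearMap ∘ₗ ρ)
    (hμ : ρ ∘ₗ μ.toLinearMap = map μ.toLinearMap γ.toLinearMap ∘ₗ ρ) :
    (ρ ∘ₗ β.symm.toLinearMap) ∘ₗ β.toLinearMap ∘ₗ μ.toLinearMap =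
      map (β.toLinearMap ∘ₗ μ.toLinearMap) (α.toLinearMap ∘ₗ γ.toLinearMap) ∘ₗ
        ρ ∘ₗ β.symm.toLinearMap := by
  have hβμ : map (β.toLinearMap ∘ₗ μ.toLinearMap) (α.toLinearMap ∘ₗ γ.toLinearMap) ∘ₗ ρ =
      ρ ∘ₗ μ.toLinearMap ∘ₗ β.toLinearMap := by
    rw [map_comp, LinearMap.comp_assoc, ← hμ, ← LinearMap.comp_assoc, ← hβ, LinearMap.comp_assoc,
      hcomm]
  rw [← LinearMap.comp_assoc _ ρ, hβμ]
  ext a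
  simp

theorem comp_symm_comp_lift_compr₂ {mulM : M →ₗ[R] M →ₗ[R] M} {mulN : N →ₗ[R] N →ₗ[R] N}
    (hβ : ρ ∘ₗ β.toLinearMap = map β.toLinearMap α.toLinearMap ∘ₗ ρ)
    (hβ_mul : ∀ a b, β (mulM a b) = mulM (β a) (β b))
    (hρ_mul : ρ ∘ₗ lift mulM = map (lift mulM) (lift mulN) ∘ₗ
      (tensorTensorTensorComm R M N M N).toLinearMap ∘ₗ map ρ ρ) :
    (ρ ∘ₗ β.symm.toLinearMap) ∘ₗ lift (mulM.compr₂ β.toLinearMap) =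
      map (lift (mulM.compr₂ β.toLinearMap)) (lift (mulN.compr₂ α.toLinearMap)) ∘ₗ
        (tensorTensorTensorComm R M N M N).toLinearMap ∘ₗ
          map (ρ ∘ₗ β.symm.toLinearMap) (ρ ∘ₗ β.symm.toLinearMap) := by
  have hββ : map β.toLinearMap β.toLinearMap ∘ₗ map β.symm.toLinearMap β.symm.toLinearMap =
      LinearMap.id := by
    rw [← map_comp, LinearEquiv.comp_symm, map_id]
  symm
  calc map (lift (mulM.compr₂ β.toLinearMap)) (lift (mulN.compr₂ α.toLinearMap)) ∘ₗ
        (tensorTensorTensorComm R M N M N).toLinearMap ∘ₗ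
          map (ρ ∘ₗ β.symm.toLinearMap) (ρ ∘ₗ β.symm.toLinearMap)
      = map β.toLinearMap α.toLinearMap ∘ₗ (map (lift mulM) (lift mulN) ∘ₗ
          (tensorTensorTensorComm R M N M N).toLinearMap ∘ₗ map ρ ρ) ∘ₗ
            map β.symm.toLinearMap β.symm.toLinearMap := by
        simp only [lift_compr₂, map_comp, LinearMap.comp_assoc]
    _ = ρ ∘ₗ lift (mulM.compr₂ β.toLinearMap) ∘ₗ map β.symm.toLinearMap β.symm.toLinearMap := by
        rw [← hρ_mul, LinearMap.comp_assoc, ← LinearMap.comp_assoc, ← hβ, lift_compr₂]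
        rfl
    _ = ρ ∘ₗ lift mulM := by
        rw [lift_compr₂_eq_lift_comp_map hβ_mul, LinearMap.comp_assoc, hββ, LinearMap.comp_id]
    _ = (ρ ∘ₗ β.symm.toLinearMap) ∘ₗ lift (mulM.compr₂ β.toLinearMap) := by
        rw [lift_compr₂, LinearMap.comp_assoc, ← LinearMap.comp_assoc (lift mulM),
          LinearEquiv.symm_comp, LinearMap.id_comp]

end Coaction

section Twist

variable {k : Type} [Field k] {H : Type} [AddCommGroup H] [Module k H]
  {A : Type} [AddCommGroup A] [Module k A]

/-- `α` is an automorphism of the monoidal Hom-bialgebra `Hb`. That `α` commutes with the structure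
automorphism is not a field, because `a * 1 = Hb.aut a` forces it. -/
structure MonoidalHomBialgebra.IsAutomorphism (Hb : MonoidalHomBialgebra k H) (α : H ≃ₗ[k] H) :
    Prop where
  map_mul : ∀ a b, α (Hb.mul a b) = Hb.mul (α a) (α b)
  map_one : α Hb.one = Hb.one
  comul_comp : Hb.comul ∘ₗ α.toLinearMap = map α.toLinearMap α.toLinearMap ∘ₗ Hb.comul
  counit_comp : Hb.counit ∘ₗ α.toLinearMap = Hb.counit

/-- `β` is an automorphism of the Hom-comodule algebra `Ac` lying over the linear automorphism `α`
of `H`, i.e. multiplicative, unital and intertwining the coaction with `β ⊗ α`. -/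
structure HomComoduleAlgebra.IsAutomorphismOver {Hb : MonoidalHomBialgebra k H}
    (Ac : HomComoduleAlgebra Hb A) (α : H ≃ₗ[k] H) (β : A ≃ₗ[k] A) : Prop where
  map_mul : ∀ a b, β (Ac.mul a b) = Ac.mul (β a) (β b)
  map_one : β Ac.one = Ac.one
  coact_comp : Ac.coact ∘ₗ β.toLinearMap = map β.toLinearMap α.toLinearMap ∘ₗ Ac.coact

namespace MonoidalHomBialgebra

variable {Hb : MonoidalHomBialgebra k H} {α : H ≃ₗ[k] H}

theorem IsAutomorphism.comp_aut_comm (hα : Hb.IsAutomorphism α) :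
    α.toLinearMap ∘ₗ Hb.aut.toLinearMap = Hb.aut.toLinearMap ∘ₗ α.toLinearMap :=
  comp_comm_of_mul_one Hb.mulOne hα.map_mul hα.map_one

/-- The twist `H_α = (H, α ∘ γ, α ∘ m, 1, Δ ∘ α⁻¹, ε)` of a monoidal Hom-bialgebra with structure
automorphism `γ`. -/
def twist (Hb : MonoidalHomBialgebra k H) (hα : Hb.IsAutomorphism α) :
    MonoidalHomBialgebra k H where
  mul := Hb.mul.compr₂ α.toLinearMap
  one := Hb.one
  comul := Hb.comul ∘ₗ α.symm.toLinearMap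
  counit := Hb.counit
  aut := Hb.aut.trans α
  hom_assoc := compr₂_hom_assoc Hb.hom_assoc hα.map_mul
  mulOne a := congrArg α (Hb.mulOne a)
  oneMul a := congrArg α (Hb.oneMul a)
  aut_mul := comp_apply_compr₂ hα.comp_aut_comm hα.map_mul Hb.aut_mul
  aut_one := (congrArg α Hb.aut_one).trans hα.map_one
  coassoc := (hom_coassoc_comp_symm hα.comul_comp Hb.coassoc.symm).symm
  counit_left := congrArg (· ∘ₗ α.symm.toLinearMap) Hb.counit_left
  counit_right := congrArg (· ∘ₗ α.symm.toLinearMap) Hb.counit_right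
  comul_aut := comp_symm_equivariant_comp hα.comp_aut_comm hα.comul_comp Hb.comul_aut
  counit_aut :=
    (congrArg (· ∘ₗ Hb.aut.toLinearMap) hα.counit_comp).trans Hb.counit_aut
  comul_mul := comp_symm_comp_lift_compr₂ hα.comul_comp hα.map_mul Hb.comul_mul
  comul_one :=
    (congrArg Hb.comul (α.symm_apply_eq.mpr hα.map_one.symm)).trans Hb.comul_one
  counit_mul a b := (LinearMap.congr_fun hα.counit_comp _).trans (Hb.counit_mul a b)
  counit_one := Hb.counit_one

end MonoidalHomBialgebra

namespace HomComoduleAlgebra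

variable {Hb : MonoidalHomBialgebra k H} {Ac : HomComoduleAlgebra Hb A}
  {α : H ≃ₗ[k] H} {β : A ≃ₗ[k] A}

theorem IsAutomorphismOver.comp_aut_comm (hβ : Ac.IsAutomorphismOver α β) :
    β.toLinearMap ∘ₗ Ac.aut.toLinearMap = Ac.aut.toLinearMap ∘ₗ β.toLinearMap :=
  comp_comm_of_mul_one Ac.mulOne hβ.map_mul hβ.map_one

/-- The twist `A_β = (A, β ∘ μ, β ∘ m, 1, ρ ∘ β⁻¹)` over `H_α` of a Hom-comodule algebra with
structure automorphism `μ`. -/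
def twist (Ac : HomComoduleAlgebra Hb A) (hα : Hb.IsAutomorphism α)
    (hβ : Ac.IsAutomorphismOver α β) : HomComoduleAlgebra (Hb.twist hα) A where
  mul := Ac.mul.compr₂ β.toLinearMap
  one := Ac.one
  aut := Ac.aut.trans β
  hom_assoc := compr₂_hom_assoc Ac.hom_assoc hβ.map_mul
  mulOne a := congrArg β (Ac.mulOne a)
  oneMul a := congrArg β (Ac.oneMul a)
  aut_mul := comp_apply_compr₂ hβ.comp_aut_comm hβ.map_mul Ac.aut_mul
  aut_one := (congrArg β Ac.aut_one).trans hβ.map_one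
  coact := Ac.coact ∘ₗ β.symm.toLinearMap
  coassoc := hom_coassoc_comp_symm hβ.coact_comp Ac.coassoc
  counit := congrArg (· ∘ₗ β.symm.toLinearMap) Ac.counit
  coact_aut := comp_symm_equivariant_comp hβ.comp_aut_comm hβ.coact_comp Ac.coact_aut
  coact_mul := comp_symm_comp_lift_compr₂ hβ.coact_comp hβ.map_mul Ac.coact_mul
  coact_one :=
    (congrArg Ac.coact (β.symm_apply_eq.mpr hβ.map_one.symm)).trans Ac.coact_one

end HomComoduleAlgebra

theorem statement1_general (Hb : MonoidalHomBialgebra k H) (Ac : HomComoduleAlgebra Hb A)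
    {α : H ≃ₗ[k] H} (hα : Hb.IsAutomorphism α)
    {β : A ≃ₗ[k] A} (hβ : Ac.IsAutomorphismOver α β) :
    ∃ Hα : MonoidalHomBialgebra k H,
      ((∀ a b, Hα.mul a b = α (Hb.mul a b)) ∧
        Hα.one = Hb.one ∧
        Hα.comul = Hb.comul ∘ₗ α.symm.toLinearMap ∧
        Hα.counit = Hb.counit ∧
        Hα.aut = Hb.aut.trans α) ∧
      ∃ Aβ : HomComoduleAlgebra Hα A,
        (∀ a b, Aβ.mul a b = β (Ac.mul a b)) ∧
        Aβ.one = Ac.one ∧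
        Aβ.aut = Ac.aut.trans β ∧
        Aβ.coact = Ac.coact ∘ₗ β.symm.toLinearMap :=
  ⟨Hb.twist hα, ⟨fun _ _ => rfl, rfl, rfl, rfl, rfl⟩,
    Ac.twist hα hβ, fun _ _ => rfl, rfl, rfl, rfl⟩

end Twist

/-! STATEMENT 1: Twisting an ordinary right H-comodule algebra `A` by a compatible
algebra automorphism `β` yields a right `(H_α, α)`-Hom-comodule algebra `A_β`. -/
theorem statement1
    (k : Type) [Field k] (H : Type) [AddCommGroup H] [Module k H]
    (mul : H →ₗ[k] H →ₗ[k] H) (one : H)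
    (comul : H →ₗ[k] H ⊗[k] H) (counit : H →ₗ[k] k)
    (hassoc : ∀ a b c, mul (mul a b) c = mul a (mul b c))
    (hmul_one : ∀ a, mul a one = a) (hone_mul : ∀ a, mul one a = a)
    (hcoassoc :
      (TensorProduct.assoc k H H H).toLinearMap ∘ₗ
          (TensorProduct.map comul LinearMap.id) ∘ₗ comul =
        (TensorProduct.map LinearMap.id comul) ∘ₗ comul)
    (hcounit_left :
      (TensorProduct.lid k H).toLinearMap ∘ₗ (TensorProduct.map counit LinearMap.id) ∘ₗ comul =
        LinearMap.id)
    (hcounit_right :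
      (TensorProduct.rid k H).toLinearMap ∘ₗ (TensorProduct.map LinearMap.id counit) ∘ₗ comul =
        LinearMap.id)
    (hcomul_mul :
      comul ∘ₗ TensorProduct.lift mul =
        (TensorProduct.map (TensorProduct.lift mul) (TensorProduct.lift mul)) ∘ₗ
          (TensorProduct.tensorTensorTensorComm k H H H H).toLinearMap ∘ₗ
            (TensorProduct.map comul comul))
    (hcomul_one : comul one = one ⊗ₜ[k] one)
    (hcounit_mul : ∀ a b, counit (mul a b) = counit a * counit b)
    (hcounit_one : counit one = 1)
    -- α is a bialgebra automorphism of H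
    (α : H ≃ₗ[k] H)
    (hα_mul : ∀ a b, α (mul a b) = mul (α a) (α b))
    (hα_one : α one = one)
    (hα_comul : comul ∘ₗ α.toLinearMap = (TensorProduct.map α.toLinearMap α.toLinearMap) ∘ₗ comul)
    (hα_counit : counit ∘ₗ α.toLinearMap = counit)
    -- A is an ordinary right H-comodule algebra
    (A : Type) [AddCommGroup A] [Module k A]
    (mulA : A →ₗ[k] A →ₗ[k] A) (oneA : A)
    (hassocA : ∀ a b c, mulA (mulA a b) c = mulA a (mulA b c))
    (hmul_oneA : ∀ a, mulA a oneA = a) (hone_mulA : ∀ a, mulA oneA a = a)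
    (ρ : A →ₗ[k] A ⊗[k] H)
    (hρ_coassoc :
      (TensorProduct.map LinearMap.id comul) ∘ₗ ρ =
        (TensorProduct.assoc k A H H).toLinearMap ∘ₗ (TensorProduct.map ρ LinearMap.id) ∘ₗ ρ)
    (hρ_counit :
      (TensorProduct.rid k A).toLinearMap ∘ₗ (TensorProduct.map LinearMap.id counit) ∘ₗ ρ =
        LinearMap.id)
    (hρ_mul :
      ρ ∘ₗ TensorProduct.lift mulA =
        (TensorProduct.map (TensorProduct.lift mulA) (TensorProduct.lift mul)) ∘ₗ
          (TensorProduct.tensorTensorTensorComm k A H A H).toLinearMap ∘ₗ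
            (TensorProduct.map ρ ρ))
    (hρ_one : ρ oneA = oneA ⊗ₜ[k] one)
    -- β is an algebra automorphism of A compatible with the coaction
    (β : A ≃ₗ[k] A)
    (hβ_mul : ∀ a b, β (mulA a b) = mulA (β a) (β b))
    (hβ_one : β oneA = oneA)
    (hρβ : ρ ∘ₗ β.toLinearMap = (TensorProduct.map β.toLinearMap α.toLinearMap) ∘ₗ ρ) :
    ∃ Hb : MonoidalHomBialgebra k H,
      ((∀ a b, Hb.mul a b = α (mul a b)) ∧
        Hb.one = one ∧
        Hb.comul = comul ∘ₗ α.symm.toLinearMap ∧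
        Hb.counit = counit ∧
        Hb.aut = α) ∧
      ∃ Ac : HomComoduleAlgebra Hb A,
        (∀ a b, Ac.mul a b = β (mulA a b)) ∧
        Ac.one = oneA ∧
        Ac.aut = β ∧
        Ac.coact = ρ ∘ₗ β.symm.toLinearMap := by
  let Hb : MonoidalHomBialgebra k H :=
    { mul, one, comul, counit, aut := .refl k H
      hom_assoc a b c := (hassoc a b c).symm
      mulOne := hmul_one, oneMul := hone_mul
      aut_mul _ _ := rfl, aut_one := rfl
      coassoc := hcoassoc, counit_left := hcounit_left, counit_right := hcounit_right
      comul_aut := by simp, counit_aut := rfl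
      comul_mul := hcomul_mul, comul_one := hcomul_one
      counit_mul := hcounit_mul, counit_one := hcounit_one }
  let Ac : HomComoduleAlgebra Hb A :=
    { mul := mulA, one := oneA, aut := .refl k A
      hom_assoc a b c := (hassocA a b c).symm
      mulOne := hmul_oneA, oneMul := hone_mulA
      aut_mul _ _ := rfl, aut_one := rfl
      coact := ρ, coassoc := hρ_coassoc, counit := hρ_counit
      coact_aut := by simp [Hb]
      coact_mul := hρ_mul, coact_one := hρ_one }
  exact statement1_general Hb Ac ⟨hα_mul, hα_one, hα_comul, hα_counit⟩ ⟨hβ_mul, hβ_one, hρβ⟩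
end

section
/- Let (H,α) be a monoidal Hom-Hopf algebra, (A,β) a right (H,α)-Hom-comodule algebra, and (M,μ) a right (A,β)-Hom-module. Then (M⊗H, μ⊗α), equipped with the action (m⊗h)·a = m·a₍₀₎ ⊗ h a₍₁₎ and the coaction ρ(m⊗h) = (μ⁻¹(m)⊗h₁)⊗α(h₂), is a right (H,A)-Hom-Hopf module; in particular the compatibility condition ρ((m⊗h)·a) = (m⊗h)₍₀₎·a₍₀₎ ⊗ (m⊗h)₍₁₎ a₍₁₎ holds for all m∈M, h∈H, a∈A. -/
open TensorProduct

/-! The coaction `H → H ⊗ H` makes `H` a Hom-Hopf module over itself, so the theorem is the case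
`N = H` of the following: if `M` is an `(A,β)`-Hom-module and `N` an `(H,H)`-Hom-Hopf module, then
`M ⊗ N` is an `(H,A)`-Hom-Hopf module. The action is the restriction along the multiplicative map
`A → A ⊗ H` of the componentwise action of `A ⊗ H`, and Hom-coassociativity of `A` matches the two
sides of the compatibility condition:
`ρ(m·a₍₀₎ ⊗ n·a₍₁₎) = (μ⁻¹(m)·β⁻¹(a₍₀₎) ⊗ n₍₀₎·a₍₁₎₁) ⊗ α(n₍₁₎ a₍₁₎₂)
  = (μ⁻¹(m)·a₍₀₎₍₀₎ ⊗ n₍₀₎·a₍₀₎₍₁₎) ⊗ α(n₍₁₎)a₍₁₎`. -/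

section TensorBilinear

variable {R M N P Q S T : Type*} [CommSemiring R]
  [AddCommMonoid M] [AddCommMonoid N] [AddCommMonoid P] [AddCommMonoid Q] [AddCommMonoid S]
  [AddCommMonoid T] [Module R M] [Module R N] [Module R P] [Module R Q] [Module R S] [Module R T]

theorem lift_map₂_eq_map_lift_comp_tensorTensorTensorComm
    (f : M →ₗ[R] P →ₗ[R] S) (g : N →ₗ[R] Q →ₗ[R] T) :
    lift (map₂ f g) =
      map (lift f) (lift g) ∘ₗ (tensorTensorTensorComm R M N P Q).toLinearMap :=
  ext_fourfold' fun _ _ _ _ => rfl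

theorem map₂_apply_tmul_right (f : M →ₗ[R] P →ₗ[R] S) (g : N →ₗ[R] Q →ₗ[R] T)
    (x : M ⊗[R] N) (p : P) (q : Q) :
    map₂ f g x (p ⊗ₜ q) = map (f.flip p) (g.flip q) x := by
  have h : (map₂ f g).flip (p ⊗ₜ q) = map (f.flip p) (g.flip q) :=
    TensorProduct.ext' fun _ _ => rfl
  exact LinearMap.congr_fun h x

theorem assoc_symm_tmul_map (m : M) (f : N →ₗ[R] P) (g : Q →ₗ[R] S) (x : N ⊗[R] Q) :
    (TensorProduct.assoc R M P S).symm (m ⊗ₜ map f g x) = map (mk R M P m ∘ₗ f) g x := by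
  have h : (TensorProduct.assoc R M P S).symm.toLinearMap ∘ₗ mk R M (P ⊗[R] S) m ∘ₗ map f g =
      map (mk R M P m ∘ₗ f) g := TensorProduct.ext' fun _ _ => rfl
  exact LinearMap.congr_fun h x

variable {M' N' P' Q' S' T' : Type*}
  [AddCommMonoid M'] [AddCommMonoid N'] [AddCommMonoid P'] [AddCommMonoid Q'] [AddCommMonoid S']
  [AddCommMonoid T'] [Module R M'] [Module R N'] [Module R P'] [Module R Q'] [Module R S']
  [Module R T']

theorem map_map₂_of_forall_eq
    {f : M →ₗ[R] P →ₗ[R] S} {g : N →ₗ[R] Q →ₗ[R] T}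
    {f' : M' →ₗ[R] P' →ₗ[R] S'} {g' : N' →ₗ[R] Q' →ₗ[R] T'}
    {φM : M →ₗ[R] M'} {φN : N →ₗ[R] N'} {φP : P →ₗ[R] P'} {φQ : Q →ₗ[R] Q'}
    {φS : S →ₗ[R] S'} {φT : T →ₗ[R] T'}
    (hf : ∀ m p, φS (f m p) = f' (φM m) (φP p)) (hg : ∀ n q, φT (g n q) = g' (φN n) (φQ q))
    (x : M ⊗[R] N) (y : P ⊗[R] Q) :
    map φS φT (map₂ f g x y) = map₂ f' g' (map φM φN x) (map φP φQ y) := by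
  induction x with
  | zero => simp
  | add x₁ x₂ h₁ h₂ => simp only [map_add, LinearMap.add_apply, h₁, h₂]
  | tmul m n =>
    induction y with
    | zero => simp
    | add y₁ y₂ h₁ h₂ => simp only [map_add, h₁, h₂]
    | tmul p q => simp [hf, hg]

theorem map₂_map₂_of_forall_eq {U V W X : Type*}
    [AddCommMonoid U] [AddCommMonoid V] [AddCommMonoid W] [AddCommMonoid X]
    [Module R U] [Module R V] [Module R W] [Module R X]
    {f : M →ₗ[R] P →ₗ[R] M'} {g : N →ₗ[R] Q →ₗ[R] N'}
    {f' : P →ₗ[R] S →ₗ[R] P'} {g' : Q →ₗ[R] T →ₗ[R] Q'}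
    {F : M' →ₗ[R] S' →ₗ[R] U} {G : N' →ₗ[R] T' →ₗ[R] V}
    {F' : W →ₗ[R] P' →ₗ[R] U} {G' : X →ₗ[R] Q' →ₗ[R] V}
    {φM : M →ₗ[R] W} {φN : N →ₗ[R] X} {φS : S →ₗ[R] S'} {φT : T →ₗ[R] T'}
    (hf : ∀ m p s, F (f m p) (φS s) = F' (φM m) (f' p s))
    (hg : ∀ n q t, G (g n q) (φT t) = G' (φN n) (g' q t))
    (x : M ⊗[R] N) (y : P ⊗[R] Q) (z : S ⊗[R] T) :
    map₂ F G (map₂ f g x y) (map φS φT z) = map₂ F' G' (map φM φN x) (map₂ f' g' y z) := by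
  induction x with
  | zero => simp
  | add x₁ x₂ h₁ h₂ => simp only [map_add, LinearMap.add_apply, h₁, h₂]
  | tmul m n =>
    induction y with
    | zero => simp
    | add y₁ y₂ h₁ h₂ => simp only [map_add, LinearMap.add_apply, h₁, h₂]
    | tmul p q =>
      induction z with
      | zero => simp
      | add z₁ z₂ h₁ h₂ => simp only [map_add, h₁, h₂]
      | tmul s t => simp [hf, hg]

end TensorBilinear

variable {k : Type} [Field k] {H : Type} [AddCommGroup H] [Module k H]
  {Hb : MonoidalHomBialgebra k H} {A : Type} [AddCommGroup A] [Module k A]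
  {Ac : HomComoduleAlgebra Hb A} {M N : Type} [AddCommGroup M] [Module k M]
  [AddCommGroup N] [Module k N]

theorem HomHopfModule.coact_act (P : HomHopfModule Ac N) (n : N) (a : A) :
    P.coact (P.act n a) = map₂ P.act Hb.mul (P.coact n) (Ac.coact a) := by
  have h := P.compat
  rw [← LinearMap.comp_assoc, ← lift_map₂_eq_map_lift_comp_tensorTensorTensorComm] at h
  exact LinearMap.congr_fun h (n ⊗ₜ a)

namespace HomComoduleAlgebra

/-- A Hom-comodule algebra as a right Hom-Hopf module over itself. -/
def regularHomHopfModule (Ac : HomComoduleAlgebra Hb A) : HomHopfModule Ac A where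
  act := Ac.mul
  aut := Ac.aut
  act_act a b c := (Ac.hom_assoc a b c).symm
  act_one := Ac.mulOne
  aut_act := Ac.aut_mul
  coact := Ac.coact
  coassoc := Ac.coassoc
  counit := Ac.counit
  coact_aut := Ac.coact_aut
  compat := Ac.coact_mul

theorem coact_aut_apply (Ac : HomComoduleAlgebra Hb A) (a : A) :
    Ac.coact (Ac.aut a) = map Ac.aut.toLinearMap Hb.aut.toLinearMap (Ac.coact a) :=
  LinearMap.congr_fun Ac.coact_aut a

theorem coact_mul_apply (Ac : HomComoduleAlgebra Hb A) (a b : A) :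
    Ac.coact (Ac.mul a b) = map₂ Ac.mul Hb.mul (Ac.coact a) (Ac.coact b) :=
  Ac.regularHomHopfModule.coact_act a b

end HomComoduleAlgebra

/-- The Hom-algebra `H` as a right Hom-comodule algebra over itself, coacting by its
comultiplication. -/
def MonoidalHomBialgebra.regularComoduleAlgebra (Hb : MonoidalHomBialgebra k H) :
    HomComoduleAlgebra Hb H where
  mul := Hb.mul
  one := Hb.one
  aut := Hb.aut
  hom_assoc := Hb.hom_assoc
  mulOne := Hb.mulOne
  oneMul := Hb.oneMul
  aut_mul := Hb.aut_mul
  aut_one := Hb.aut_one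
  coact := Hb.comul
  coassoc := Hb.coassoc.symm
  counit := Hb.counit_right
  coact_aut := Hb.comul_aut
  coact_mul := Hb.comul_mul
  coact_one := Hb.comul_one

namespace HomModule

/-- The action of `A` on `M ⊗ N`, for an `A`-Hom-module `M` and an `H`-Hom-module `N`: the
restriction along the coaction `A → A ⊗ H` of the componentwise action of `A ⊗ H`. -/
def tensorAct (Mm : HomModule Ac M) (Nm : HomModule Hb.regularComoduleAlgebra N) :
    M ⊗[k] N →ₗ[k] A →ₗ[k] M ⊗[k] N :=
  (map₂ Mm.act Nm.act).compl₂ Ac.coact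

theorem tensorAct_apply (Mm : HomModule Ac M) (Nm : HomModule Hb.regularComoduleAlgebra N)
    (x : M ⊗[k] N) (a : A) :
    Mm.tensorAct Nm x a = map₂ Mm.act Nm.act x (Ac.coact a) :=
  rfl

/-- The tensor product of an `A`-Hom-module and an `H`-Hom-module, as an `A`-Hom-module. -/
def tensor (Mm : HomModule Ac M) (Nm : HomModule Hb.regularComoduleAlgebra N) :
    HomModule Ac (M ⊗[k] N) where
  act := Mm.tensorAct Nm
  aut := congr Mm.aut Nm.aut
  act_act x a b := by
    simp only [tensorAct_apply, Ac.coact_aut_apply, Ac.coact_mul_apply]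
    exact map₂_map₂_of_forall_eq Mm.act_act Nm.act_act x _ _
  act_one x := by
    have hM : Mm.act.flip Ac.one = Mm.aut.toLinearMap := LinearMap.ext Mm.act_one
    have hN : Nm.act.flip Hb.one = Nm.aut.toLinearMap := LinearMap.ext Nm.act_one
    rw [tensorAct_apply, Ac.coact_one, map₂_apply_tmul_right, hM, hN]
    rfl
  aut_act x a := by
    simp only [tensorAct_apply, Ac.coact_aut_apply]
    exact map_map₂_of_forall_eq Mm.aut_act Nm.aut_act x _

end HomModule

namespace HomComodule

/-- The coaction `m ⊗ n ↦ (μ⁻¹(m) ⊗ n₍₀₎) ⊗ α(n₍₁₎)` on `M ⊗ N`, for a Hom-comodule `N` and a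
vector space `M` with an automorphism `μ`. -/
def lTensorCoact (C : HomComodule Hb N) (μ : M ≃ₗ[k] M) :
    M ⊗[k] N →ₗ[k] (M ⊗[k] N) ⊗[k] H :=
  (TensorProduct.assoc k M N H).symm.toLinearMap ∘ₗ
    map μ.symm.toLinearMap (map LinearMap.id Hb.aut.toLinearMap ∘ₗ C.coact)

theorem lTensorCoact_tmul (C : HomComodule Hb N) (μ : M ≃ₗ[k] M) (m : M) (n : N) :
    C.lTensorCoact μ (m ⊗ₜ n) = (TensorProduct.assoc k M N H).symm
      (μ.symm m ⊗ₜ map LinearMap.id Hb.aut.toLinearMap (C.coact n)) :=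
  rfl

theorem lTensorCoact_comp_mk (C : HomComodule Hb N) (μ : M ≃ₗ[k] M) (m : M) :
    C.lTensorCoact μ ∘ₗ TensorProduct.mk k M N m =
      map (TensorProduct.mk k M N (μ.symm m)) Hb.aut.toLinearMap ∘ₗ C.coact :=
  LinearMap.ext fun n => assoc_symm_tmul_map _ _ _ (C.coact n)

theorem lTensorCoact_coassoc (C : HomComodule Hb N) (μ : M ≃ₗ[k] M) :
    map (congr μ C.aut).symm.toLinearMap Hb.comul ∘ₗ C.lTensorCoact μ =
      (TensorProduct.assoc k (M ⊗[k] N) H H).toLinearMap ∘ₗ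
        map (C.lTensorCoact μ) Hb.aut.symm.toLinearMap ∘ₗ C.lTensorCoact μ := by
  refine TensorProduct.ext (LinearMap.ext fun m => ?_)
  let ι := TensorProduct.mk k M N (μ.symm (μ.symm m))
  let α := Hb.aut.toLinearMap
  have hι : (congr μ C.aut).symm.toLinearMap ∘ₗ TensorProduct.mk k M N (μ.symm m) =
      ι ∘ₗ C.aut.symm.toLinearMap := rfl
  have hα : Hb.aut.symm.toLinearMap ∘ₗ α = α ∘ₗ Hb.aut.symm.toLinearMap := by simp [α]
  calc (map (congr μ C.aut).symm.toLinearMap Hb.comul ∘ₗ C.lTensorCoact μ) ∘ₗ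
          TensorProduct.mk k M N m
    _ = map (ι ∘ₗ C.aut.symm.toLinearMap) (Hb.comul ∘ₗ α) ∘ₗ C.coact := by
      rw [LinearMap.comp_assoc, lTensorCoact_comp_mk, ← LinearMap.comp_assoc, ← map_comp, hι]
    _ = map ι (map α α) ∘ₗ map C.aut.symm.toLinearMap Hb.comul ∘ₗ C.coact := by
      rw [Hb.comul_aut, map_comp, LinearMap.comp_assoc]
    _ = (map ι (map α α) ∘ₗ (TensorProduct.assoc k N H H).toLinearMap) ∘ₗ
          map C.coact Hb.aut.symm.toLinearMap ∘ₗ C.coact := by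
      rw [C.coassoc, LinearMap.comp_assoc]
    _ = (TensorProduct.assoc k (M ⊗[k] N) H H).toLinearMap ∘ₗ
          map (map ι α ∘ₗ C.coact) (α ∘ₗ Hb.aut.symm.toLinearMap) ∘ₗ C.coact := by
      rw [map_map_comp_assoc_eq, map_comp]
      simp only [LinearMap.comp_assoc]
    _ = ((TensorProduct.assoc k (M ⊗[k] N) H H).toLinearMap ∘ₗ
          map (C.lTensorCoact μ) Hb.aut.symm.toLinearMap ∘ₗ C.lTensorCoact μ) ∘ₗ
          TensorProduct.mk k M N m := by
      simp only [LinearMap.comp_assoc, lTensorCoact_comp_mk]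
      rw [← hα, ← lTensorCoact_comp_mk, map_comp, LinearMap.comp_assoc]

theorem lTensorCoact_counit (C : HomComodule Hb N) (μ : M ≃ₗ[k] M) :
    (TensorProduct.rid k (M ⊗[k] N)).toLinearMap ∘ₗ map LinearMap.id Hb.counit ∘ₗ
        C.lTensorCoact μ =
      (congr μ C.aut).symm.toLinearMap := by
  refine TensorProduct.ext (LinearMap.ext fun m => ?_)
  let ι := TensorProduct.mk k M N (μ.symm m)
  have rid_map : (TensorProduct.rid k (M ⊗[k] N)).toLinearMap ∘ₗ map ι LinearMap.id =
      ι ∘ₗ (TensorProduct.rid k N).toLinearMap :=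
    TensorProduct.ext' fun n c => by simp [ι]
  calc ((TensorProduct.rid k (M ⊗[k] N)).toLinearMap ∘ₗ map LinearMap.id Hb.counit ∘ₗ
          C.lTensorCoact μ) ∘ₗ TensorProduct.mk k M N m
    _ = (TensorProduct.rid k (M ⊗[k] N)).toLinearMap ∘ₗ
          map ι (Hb.counit ∘ₗ Hb.aut.toLinearMap) ∘ₗ C.coact := by
      rw [LinearMap.comp_assoc, LinearMap.comp_assoc, lTensorCoact_comp_mk,
        ← LinearMap.comp_assoc C.coact, ← map_comp, LinearMap.id_comp]
    _ = ((TensorProduct.rid k (M ⊗[k] N)).toLinearMap ∘ₗ map ι LinearMap.id) ∘ₗ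
          map LinearMap.id Hb.counit ∘ₗ C.coact := by
      rw [Hb.counit_aut, LinearMap.comp_assoc, ← LinearMap.comp_assoc C.coact (map _ _) (map ι _),
        ← map_comp, LinearMap.comp_id, LinearMap.id_comp]
    _ = ι ∘ₗ C.aut.symm.toLinearMap := by
      rw [rid_map, LinearMap.comp_assoc, C.counit]

theorem lTensorCoact_comp_congr_aut (C : HomComodule Hb N) (μ : M ≃ₗ[k] M) :
    C.lTensorCoact μ ∘ₗ (congr μ C.aut).toLinearMap =
      map (congr μ C.aut).toLinearMap Hb.aut.toLinearMap ∘ₗ C.lTensorCoact μ := by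
  refine TensorProduct.ext (LinearMap.ext fun m => ?_)
  let α := Hb.aut.toLinearMap
  have congr_comp_mk (m : M) : (congr μ C.aut).toLinearMap ∘ₗ TensorProduct.mk k M N m =
      TensorProduct.mk k M N (μ m) ∘ₗ C.aut.toLinearMap := rfl
  calc (C.lTensorCoact μ ∘ₗ (congr μ C.aut).toLinearMap) ∘ₗ TensorProduct.mk k M N m
    _ = map (TensorProduct.mk k M N (μ.symm (μ m))) α ∘ₗ C.coact ∘ₗ C.aut.toLinearMap := by
      rw [LinearMap.comp_assoc, congr_comp_mk, ← LinearMap.comp_assoc, lTensorCoact_comp_mk,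
        LinearMap.comp_assoc]
    _ = map (TensorProduct.mk k M N (μ (μ.symm m)) ∘ₗ C.aut.toLinearMap) (α ∘ₗ α) ∘ₗ C.coact := by
      rw [C.coact_aut, ← LinearMap.comp_assoc, ← map_comp, μ.symm_apply_apply,
        μ.apply_symm_apply]
    _ = (map (congr μ C.aut).toLinearMap α ∘ₗ C.lTensorCoact μ) ∘ₗ
          TensorProduct.mk k M N m := by
      rw [LinearMap.comp_assoc, lTensorCoact_comp_mk, ← LinearMap.comp_assoc, ← map_comp,
        congr_comp_mk]

/-- The Hom-comodule `M ⊗ N` with the coaction of `HomComodule.lTensorCoact`. -/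
def lTensor (C : HomComodule Hb N) (μ : M ≃ₗ[k] M) : HomComodule Hb (M ⊗[k] N) where
  coact := C.lTensorCoact μ
  aut := congr μ C.aut
  coassoc := C.lTensorCoact_coassoc μ
  counit := C.lTensorCoact_counit μ
  coact_aut := C.lTensorCoact_comp_congr_aut μ

end HomComodule

namespace HomHopfModule

/-- The Hom-module underlying a Hom-Hopf module. -/
def toHomModule (P : HomHopfModule Ac N) : HomModule Ac N where
  act := P.act
  aut := P.aut
  act_act := P.act_act
  act_one := P.act_one
  aut_act := P.aut_act

/-- The Hom-comodule underlying a Hom-Hopf module. -/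
def toHomComodule (P : HomHopfModule Ac N) : HomComodule Hb N where
  coact := P.coact
  aut := P.aut
  coassoc := P.coassoc
  counit := P.counit
  coact_aut := P.coact_aut

/-- The map `A ⊗ (H ⊗ H) → (M ⊗ N) ⊗ H` sending `a ⊗ (x ⊗ y)` to `(m·a ⊗ n·x) ⊗ h α(y)` when
`u = n ⊗ h`. Both sides of the compatibility condition for `M ⊗ N` are values of it, at two
elements that Hom-coassociativity of `A` identifies. -/
def tensorActAssoc (Mm : HomModule Ac M) (P : HomHopfModule Hb.regularComoduleAlgebra N)
    (m : M) (u : N ⊗[k] H) : A ⊗[k] (H ⊗[k] H) →ₗ[k] (M ⊗[k] N) ⊗[k] H :=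
  (TensorProduct.assoc k M N H).symm.toLinearMap ∘ₗ
    map (Mm.act m) (map₂ P.act Hb.mul u ∘ₗ map LinearMap.id Hb.aut.toLinearMap)

theorem lTensorCoact_map_act (Mm : HomModule Ac M)
    (P : HomHopfModule Hb.regularComoduleAlgebra N) (m : M) (n : N) (t : A ⊗[k] H) :
    P.toHomComodule.lTensorCoact Mm.aut (map (Mm.act m) (P.act n) t) =
      tensorActAssoc Mm P (Mm.aut.symm m) (map LinearMap.id Hb.aut.toLinearMap (P.coact n))
        (map Ac.aut.symm.toLinearMap Hb.comul t) := by
  induction t with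
  | zero => simp
  | add x y hx hy => simp only [map_add, hx, hy]
  | tmul a h =>
    have aut_symm_act : Mm.aut.symm (Mm.act m a) = Mm.act (Mm.aut.symm m) (Ac.aut.symm a) := by
      simp [LinearEquiv.symm_apply_eq, Mm.aut_act]
    have twist_coact_act :
        map LinearMap.id Hb.aut.toLinearMap (P.coact (P.act n h)) =
          map₂ P.act Hb.mul (map LinearMap.id Hb.aut.toLinearMap (P.coact n))
            (map LinearMap.id Hb.aut.toLinearMap (Hb.comul h)) := by
      rw [P.coact_act]
      exact map_map₂_of_forall_eq (fun _ _ => rfl) Hb.aut_mul _ _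
    rw [map_tmul, HomComodule.lTensorCoact_tmul, aut_symm_act]
    exact congrArg (fun v => (TensorProduct.assoc k M N H).symm (_ ⊗ₜ v)) twist_coact_act

theorem map₂_tensorAct_map_mk (Mm : HomModule Ac M)
    (P : HomHopfModule Hb.regularComoduleAlgebra N) (m : M) (u : N ⊗[k] H) (t : A ⊗[k] H) :
    map₂ (Mm.tensorAct P.toHomModule) Hb.mul (map (TensorProduct.mk k M N m) LinearMap.id u) t =
      tensorActAssoc Mm P m u
        (TensorProduct.assoc k A H H (map Ac.coact Hb.aut.symm.toLinearMap t)) := by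
  induction t with
  | zero => simp
  | add x y hx hy => simp only [map_add, hx, hy]
  | tmul a h =>
    induction u with
    | zero => simp [tensorActAssoc]
    | add x y hx hy =>
      simp only [tensorActAssoc, map_add, LinearMap.add_apply, LinearMap.add_comp,
        LinearMap.comp_add, map_add_right] at hx hy ⊢
      rw [hx, hy]
    | tmul n g =>
      calc map₂ (Mm.tensorAct P.toHomModule) Hb.mul
            (map (TensorProduct.mk k M N m) LinearMap.id (n ⊗ₜ g)) (a ⊗ₜ h)
        _ = map (map (Mm.act m) (P.act n)) (Hb.mul g ∘ₗ Hb.aut.toLinearMap)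
              (Ac.coact a ⊗ₜ Hb.aut.symm h) := by
          rw [map_tmul (f := map _ _), LinearMap.comp_apply, LinearEquiv.coe_coe,
            Hb.aut.apply_symm_apply]
          rfl
        _ = (TensorProduct.assoc k M N H).symm
              (map (Mm.act m) (map (P.act n) (Hb.mul g ∘ₗ Hb.aut.toLinearMap))
                (TensorProduct.assoc k A H H (Ac.coact a ⊗ₜ Hb.aut.symm h))) := by
          rw [map_map_assoc, LinearEquiv.symm_apply_apply]
        _ = tensorActAssoc Mm P m (n ⊗ₜ g)
              (TensorProduct.assoc k A H H (map Ac.coact Hb.aut.symm.toLinearMap (a ⊗ₜ h))) := by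
          rw [tensorActAssoc, map₂_apply_tmul, ← map_comp, LinearMap.comp_id]
          rfl

theorem lTensorCoact_tensorAct (Mm : HomModule Ac M)
    (P : HomHopfModule Hb.regularComoduleAlgebra N) (x : M ⊗[k] N) (a : A) :
    P.toHomComodule.lTensorCoact Mm.aut (Mm.tensorAct P.toHomModule x a) =
      map₂ (Mm.tensorAct P.toHomModule) Hb.mul
        (P.toHomComodule.lTensorCoact Mm.aut x) (Ac.coact a) := by
  induction x with
  | zero => simp
  | add x y hx hy => simp only [map_add, LinearMap.add_apply, hx, hy]
  | tmul m n =>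
    let u := map LinearMap.id Hb.aut.toLinearMap (P.coact n)
    calc P.toHomComodule.lTensorCoact Mm.aut (Mm.tensorAct P.toHomModule (m ⊗ₜ n) a)
      _ = tensorActAssoc Mm P (Mm.aut.symm m) u
            (map Ac.aut.symm.toLinearMap Hb.comul (Ac.coact a)) :=
        P.lTensorCoact_map_act Mm m n (Ac.coact a)
      _ = tensorActAssoc Mm P (Mm.aut.symm m) u
            (TensorProduct.assoc k A H H
              (map Ac.coact Hb.aut.symm.toLinearMap (Ac.coact a))) :=
        congrArg _ (LinearMap.congr_fun Ac.coassoc a)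
      _ = map₂ (Mm.tensorAct P.toHomModule) Hb.mul
            (map (TensorProduct.mk k M N (Mm.aut.symm m)) LinearMap.id u) (Ac.coact a) :=
        (P.map₂_tensorAct_map_mk Mm _ u _).symm
      _ = map₂ (Mm.tensorAct P.toHomModule) Hb.mul
            (P.toHomComodule.lTensorCoact Mm.aut (m ⊗ₜ n)) (Ac.coact a) := by
        rw [HomComodule.lTensorCoact_tmul, assoc_symm_tmul_map, map_map]
        rfl

/-- The Hom-Hopf module `M ⊗ N`, for an `(A,β)`-Hom-module `M` and an `(H,H)`-Hom-Hopf
module `N`. -/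
def lTensor (Mm : HomModule Ac M) (P : HomHopfModule Hb.regularComoduleAlgebra N) :
    HomHopfModule Ac (M ⊗[k] N) where
  __ := Mm.tensor P.toHomModule
  __ := P.toHomComodule.lTensor Mm.aut
  compat := by
    rw [← LinearMap.comp_assoc, ← lift_map₂_eq_map_lift_comp_tensorTensorTensorComm]
    exact TensorProduct.ext' (P.lTensorCoact_tensorAct Mm)

end HomHopfModule

theorem statement3_general (Mm : HomModule Ac M)
    (P : HomHopfModule Hb.regularComoduleAlgebra N) :
    ∃ Q : HomHopfModule Ac (M ⊗[k] N),
      Q.aut = congr Mm.aut P.aut ∧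
      (∀ (m : M) (n : N) (a : A),
        Q.act (m ⊗ₜ n) a = map (Mm.act m) (P.act n) (Ac.coact a)) ∧
      ∀ (m : M) (n : N),
        Q.coact (m ⊗ₜ n) = (TensorProduct.assoc k M N H).symm
          (Mm.aut.symm m ⊗ₜ map LinearMap.id Hb.aut.toLinearMap (P.coact n)) :=
  ⟨P.lTensor Mm, rfl, fun _ _ _ => rfl, fun _ _ => rfl⟩

/-! STATEMENT 3: For a right `(A,β)`-Hom-module `(M,μ)`, the space `M ⊗ H` with
`(m⊗h)·a = m·a₍₀₎ ⊗ h a₍₁₎` and `ρ(m⊗h) = (μ⁻¹(m)⊗h₁)⊗α(h₂)` is a right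
`(H,A)`-Hom-Hopf module. -/
theorem statement3
    (k : Type) [Field k] (H : Type) [AddCommGroup H] [Module k H]
    (Hh : MonoidalHomHopf k H)
    (A : Type) [AddCommGroup A] [Module k A]
    (Ac : HomComoduleAlgebra Hh.toMonoidalHomBialgebra A)
    (M : Type) [AddCommGroup M] [Module k M]
    (Mm : HomModule Ac M) :
    ∃ P : HomHopfModule Ac (M ⊗[k] H),
      P.aut = TensorProduct.congr Mm.aut Hh.aut ∧
      (∀ (m : M) (h : H) (a : A),
        P.act (m ⊗ₜ[k] h) a = (TensorProduct.map (Mm.act m) (Hh.mul h)) (Ac.coact a)) ∧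
      (∀ (m : M) (h : H),
        P.coact (m ⊗ₜ[k] h) =
          (TensorProduct.assoc k M H H).symm
            (Mm.aut.symm m ⊗ₜ[k]
              (TensorProduct.map LinearMap.id Hh.aut.toLinearMap) (Hh.comul h))) := by
  exact statement3_general Mm Hh.regularComoduleAlgebra.regularHomHopfModule
end
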